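/- arXiv:2102.06347 — 11 statements merged into one kernel-verified Lean document; each statement's English description precedes it below -/
import Mathlib

section
/- Let c > 0, ξ > 0 and ε > 0 satisfy ξε > 2c. Then for all real numbers Q₁₁, Q₁₂, M₁, M₂, the ferronematic bulk energy density satisfies the lower bound (Q₁₁²+Q₁₂²−1)² + (ξ/4)(M₁²+M₂²−1)² − cQ₁₁(M₁²−M₂²) − 2cQ₁₂M₁M₂ ≥ (Q₁₁²+Q₁₂² − (1 + cε/2))² + ((ξε−2c)/(4ε))·(M₁²+M₂² − ξε/(ξε−2c))² − (cε + c²ε²/4 + cξ/(2(ξε−2c))). In particular, the bulk density is bounded below by a constant depending only on c, ξ, ε. -/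
/-- The ferronematic bulk energy density with coupling parameter `c` and
magnetic weight `ξ`. -/
noncomputable def ferroBulk (c ξ Q11 Q12 M1 M2 : ℝ) : ℝ :=
  (Q11 ^ 2 + Q12 ^ 2 - 1) ^ 2 + ξ / 4 * (M1 ^ 2 + M2 ^ 2 - 1) ^ 2
    - c * Q11 * (M1 ^ 2 - M2 ^ 2) - 2 * c * Q12 * M1 * M2

/-- Completing the squares: the lower bound is the decoupled energy minus the Young terms. -/
lemma completed_squares_eq (c ξ ε P m : ℝ) (hε : ε ≠ 0) (h : ξ * ε - 2 * c ≠ 0) :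
    (P - (1 + c * ε / 2)) ^ 2
        + (ξ * ε - 2 * c) / (4 * ε) * (m - ξ * ε / (ξ * ε - 2 * c)) ^ 2
        - (c * ε + c ^ 2 * ε ^ 2 / 4 + c * ξ / (2 * (ξ * ε - 2 * c)))
      = (P - 1) ^ 2 + ξ / 4 * (m - 1) ^ 2 - c * (ε * P + m ^ 2 / (2 * ε)) := by
  obtain ⟨d, hd⟩ : ∃ d, d = ξ * ε - 2 * c := ⟨_, rfl⟩
  rw [← hd] at h ⊢
  obtain rfl : c = (ξ * ε - d) / 2 := by linarith
  field_simp
  ring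

/-- Young's inequality for the nematic-magnetic coupling term. -/
lemma coupling_le (ε Q11 Q12 M1 M2 : ℝ) (hε : 0 < ε) :
    Q11 * (M1 ^ 2 - M2 ^ 2) + 2 * Q12 * M1 * M2
      ≤ ε * (Q11 ^ 2 + Q12 ^ 2) + (M1 ^ 2 + M2 ^ 2) ^ 2 / (2 * ε) := by
  have key : ε * (Q11 ^ 2 + Q12 ^ 2) + (M1 ^ 2 + M2 ^ 2) ^ 2 / (2 * ε)
      - (Q11 * (M1 ^ 2 - M2 ^ 2) + 2 * Q12 * M1 * M2)
      = ((ε * Q11 - (M1 ^ 2 - M2 ^ 2)) ^ 2 + (ε * Q12 - 2 * M1 * M2) ^ 2) / (2 * ε)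
        + ε * (Q11 ^ 2 + Q12 ^ 2) / 2 := by
    field_simp
    ring
  rw [← sub_nonneg, key]
  positivity

/-- Lower bound for the ferronematic bulk energy density. -/
theorem ferroBulk_lower_bound (c ξ ε : ℝ) (hc : 0 < c) (hξ : 0 < ξ) (hε : 0 < ε)
    (h : 2 * c < ξ * ε) :
    (∀ Q11 Q12 M1 M2 : ℝ,
      ferroBulk c ξ Q11 Q12 M1 M2 ≥
        (Q11 ^ 2 + Q12 ^ 2 - (1 + c * ε / 2)) ^ 2
          + (ξ * ε - 2 * c) / (4 * ε) * (M1 ^ 2 + M2 ^ 2 - ξ * ε / (ξ * ε - 2 * c)) ^ 2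
          - (c * ε + c ^ 2 * ε ^ 2 / 4 + c * ξ / (2 * (ξ * ε - 2 * c)))) ∧
    ∃ K : ℝ, ∀ Q11 Q12 M1 M2 : ℝ, ferroBulk c ξ Q11 Q12 M1 M2 ≥ K := by
  have hd : 0 < ξ * ε - 2 * c := sub_pos.mpr h
  have bound : ∀ Q11 Q12 M1 M2 : ℝ,
      ferroBulk c ξ Q11 Q12 M1 M2 ≥
        (Q11 ^ 2 + Q12 ^ 2 - (1 + c * ε / 2)) ^ 2
          + (ξ * ε - 2 * c) / (4 * ε) * (M1 ^ 2 + M2 ^ 2 - ξ * ε / (ξ * ε - 2 * c)) ^ 2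
          - (c * ε + c ^ 2 * ε ^ 2 / 4 + c * ξ / (2 * (ξ * ε - 2 * c))) := by
    intro Q11 Q12 M1 M2
    rw [completed_squares_eq c ξ ε _ _ hε.ne' hd.ne', ferroBulk]
    linarith [mul_le_mul_of_nonneg_left (coupling_le ε Q11 Q12 M1 M2 hε) hc.le]
  refine ⟨bound, -(c * ε + c ^ 2 * ε ^ 2 / 4 + c * ξ / (2 * (ξ * ε - 2 * c))), ?_⟩
  intro Q11 Q12 M1 M2
  refine le_trans ?_ (bound Q11 Q12 M1 M2)
  rw [sub_eq_add_neg]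
  exact le_add_of_nonneg_left (by positivity)
end

section
/- Let c ≠ 0, ξ > 0, ρ > 0, σ > 0 and θ, φ be real numbers satisfying the critical-point equations of the ferronematic bulk potential: 4ρcos(θ)(ρ²−1) = cσ²cos(2φ), 4ρsin(θ)(ρ²−1) = cσ²sin(2φ), ξσcos(φ)(σ²−1) = 2σρc·cos(θ−φ), and ξσsin(φ)(σ²−1) = 2σρc·sin(θ−φ). Then sin(2φ−θ) = 0; equivalently, there exists an integer n such that 2φ − θ = nπ. -/
open Real

/-- Critical points of the ferronematic bulk potential in polar variables satisfy the
alignment constraint `2φ − θ = nπ`. -/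
theorem alignment_constraint (c ξ ρ σ θ φ : ℝ) (hc : c ≠ 0) (hξ : 0 < ξ)
    (hρ : 0 < ρ) (hσ : 0 < σ)
    (h1 : 4 * ρ * Real.cos θ * (ρ ^ 2 - 1) = c * σ ^ 2 * Real.cos (2 * φ))
    (h2 : 4 * ρ * Real.sin θ * (ρ ^ 2 - 1) = c * σ ^ 2 * Real.sin (2 * φ))
    (h3 : ξ * σ * Real.cos φ * (σ ^ 2 - 1) = 2 * σ * ρ * c * Real.cos (θ - φ))
    (h4 : ξ * σ * Real.sin φ * (σ ^ 2 - 1) = 2 * σ * ρ * c * Real.sin (θ - φ)) :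
    Real.sin (2 * φ - θ) = 0 ∧ ∃ n : ℤ, 2 * φ - θ = n * π := by
  have h : c * σ ^ 2 * Real.sin (2 * φ - θ) = 0 := by
    rw [Real.sin_sub]
    linear_combination Real.sin θ * h1 - Real.cos θ * h2
  have hsin : Real.sin (2 * φ - θ) = 0 :=
    (mul_eq_zero.mp h).resolve_left (mul_ne_zero hc (pow_ne_zero 2 hσ.ne'))
  obtain ⟨n, hn⟩ := Real.sin_eq_zero_iff.mp hsin
  exact ⟨hsin, n, hn.symm⟩
end

section
/- Let c ≠ 0, ξ > 0, ρ > 0, σ > 0 and θ, φ be real numbers satisfying the critical-point equations: 4ρcos(θ)(ρ²−1) = cσ²cos(2φ), 4ρsin(θ)(ρ²−1) = cσ²sin(2φ), ξσcos(φ)(σ²−1) = 2σρc·cos(θ−φ), ξσsin(φ)(σ²−1) = 2σρc·sin(θ−φ). If in addition 2φ − θ = 2nπ for some integer n, then σ² = 1 + 2ρc/ξ and ρ satisfies the cubic equation ρ³ − ρ(1 + c²/(2ξ)) − c/4 = 0. -/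
open Real

/-- At a critical point of the ferronematic bulk potential with alignment
`2φ − θ = 2nπ`, one has `σ² = 1 + 2ρc/ξ` and `ρ` solves the cubic
`ρ³ − ρ(1 + c²/(2ξ)) − c/4 = 0`. -/
theorem critical_point_even_alignment (c ξ ρ σ θ φ : ℝ) (hc : c ≠ 0) (hξ : 0 < ξ)
    (hρ : 0 < ρ) (hσ : 0 < σ)
    (h1 : 4 * ρ * Real.cos θ * (ρ ^ 2 - 1) = c * σ ^ 2 * Real.cos (2 * φ))
    (h2 : 4 * ρ * Real.sin θ * (ρ ^ 2 - 1) = c * σ ^ 2 * Real.sin (2 * φ))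
    (h3 : ξ * σ * Real.cos φ * (σ ^ 2 - 1) = 2 * σ * ρ * c * Real.cos (θ - φ))
    (h4 : ξ * σ * Real.sin φ * (σ ^ 2 - 1) = 2 * σ * ρ * c * Real.sin (θ - φ))
    (halign : ∃ n : ℤ, 2 * φ - θ = 2 * n * π) :
    σ ^ 2 = 1 + 2 * ρ * c / ξ ∧ ρ ^ 3 - ρ * (1 + c ^ 2 / (2 * ξ)) - c / 4 = 0 := by
  obtain ⟨n, hn⟩ := halign
  have hφ : θ - φ = φ - n * (2 * π) := by linear_combination -hn
  have hθ : 2 * φ = θ + n * (2 * π) := by linear_combination hn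
  rw [hθ, Real.cos_add_int_mul_two_pi] at h1
  rw [hθ, Real.sin_add_int_mul_two_pi] at h2
  rw [hφ, Real.cos_sub_int_mul_two_pi] at h3
  rw [hφ, Real.sin_sub_int_mul_two_pi] at h4
  have hρσ : 4 * ρ * (ρ ^ 2 - 1) = c * σ ^ 2 := by
    linear_combination Real.cos θ * h1 + Real.sin θ * h2 -
      (4 * ρ * (ρ ^ 2 - 1) - c * σ ^ 2) * Real.sin_sq_add_cos_sq θ
  have hσρ : ξ * (σ ^ 2 - 1) = 2 * ρ * c := by
    apply mul_left_cancel₀ hσ.ne'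
    linear_combination Real.cos φ * h3 + Real.sin φ * h4 -
      σ * (ξ * (σ ^ 2 - 1) - 2 * ρ * c) * Real.sin_sq_add_cos_sq φ
  have hσ_sq : σ ^ 2 = 1 + 2 * ρ * c / ξ := by
    field_simp
    linear_combination hσρ
  refine ⟨hσ_sq, ?_⟩
  rw [hσ_sq] at hρσ
  linear_combination hρσ / 4
end

section
/- Let c ≠ 0, ξ > 0, ρ > 0, σ > 0 and θ, φ be real numbers satisfying the critical-point equations: 4ρcos(θ)(ρ²−1) = cσ²cos(2φ), 4ρsin(θ)(ρ²−1) = cσ²sin(2φ), ξσcos(φ)(σ²−1) = 2σρc·cos(θ−φ), ξσsin(φ)(σ²−1) = 2σρc·sin(θ−φ). If in addition 2φ − θ = (2n+1)π for some integer n, then σ² = 1 − 2ρc/ξ and ρ satisfies the cubic equation ρ³ − ρ(1 + c²/(2ξ)) + c/4 = 0. -/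
open Real

/-- A vector in polar form determines its (signed) radius once the angle is fixed. -/
theorem eq_of_mul_cos_eq_of_mul_sin_eq {a b x : ℝ} (hcos : a * Real.cos x = b * Real.cos x)
    (hsin : a * Real.sin x = b * Real.sin x) : a = b := by
  linear_combination Real.cos x * hcos + Real.sin x * hsin - (a - b) * Real.sin_sq_add_cos_sq x

/-- At a critical point of the ferronematic bulk potential with alignment
`2φ − θ = (2n+1)π`, one has `σ² = 1 − 2ρc/ξ` and `ρ` solves the cubic
`ρ³ − ρ(1 + c²/(2ξ)) + c/4 = 0`. -/
theorem critical_point_odd_alignment (c ξ ρ σ θ φ : ℝ) (hc : c ≠ 0) (hξ : 0 < ξ)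
    (hρ : 0 < ρ) (hσ : 0 < σ)
    (h1 : 4 * ρ * Real.cos θ * (ρ ^ 2 - 1) = c * σ ^ 2 * Real.cos (2 * φ))
    (h2 : 4 * ρ * Real.sin θ * (ρ ^ 2 - 1) = c * σ ^ 2 * Real.sin (2 * φ))
    (h3 : ξ * σ * Real.cos φ * (σ ^ 2 - 1) = 2 * σ * ρ * c * Real.cos (θ - φ))
    (h4 : ξ * σ * Real.sin φ * (σ ^ 2 - 1) = 2 * σ * ρ * c * Real.sin (θ - φ))
    (halign : ∃ n : ℤ, 2 * φ - θ = (2 * n + 1) * π) :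
    σ ^ 2 = 1 - 2 * ρ * c / ξ ∧ ρ ^ 3 - ρ * (1 + c ^ 2 / (2 * ξ)) + c / 4 = 0 := by
  obtain ⟨n, hn⟩ := halign
  have cos_sub_odd (x : ℝ) : Real.cos (x - (2 * n + 1) * π) = -Real.cos x := by
    rw [← Real.cos_sub_pi, ← Real.cos_sub_int_mul_two_pi (x - π) n]
    ring_nf
  have sin_sub_odd (x : ℝ) : Real.sin (x - (2 * n + 1) * π) = -Real.sin x := by
    rw [← Real.sin_sub_pi, ← Real.sin_sub_int_mul_two_pi (x - π) n]
    ring_nf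
  have hθ : θ = 2 * φ - (2 * n + 1) * π := by linarith
  have hθφ : θ - φ = φ - (2 * n + 1) * π := by linarith
  rw [hθφ, cos_sub_odd] at h3
  rw [hθφ, sin_sub_odd] at h4
  rw [hθ, cos_sub_odd] at h1
  rw [hθ, sin_sub_odd] at h2
  have hQ : 4 * ρ * (ρ ^ 2 - 1) = -(c * σ ^ 2) :=
    eq_of_mul_cos_eq_of_mul_sin_eq (x := 2 * φ) (by linear_combination -h1)
      (by linear_combination -h2)
  have hM : ξ * (σ ^ 2 - 1) = -(2 * ρ * c) :=
    mul_left_cancel₀ hσ.ne' <| eq_of_mul_cos_eq_of_mul_sin_eq (x := φ)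
      (by linear_combination h3) (by linear_combination h4)
  have hσ_sq : σ ^ 2 = 1 - 2 * ρ * c / ξ := by
    field_simp
    linear_combination hM
  refine ⟨hσ_sq, ?_⟩
  rw [hσ_sq] at hQ
  have hdiv : c ^ 2 / (2 * ξ) = c ^ 2 / ξ / 2 := by field_simp
  rw [hdiv]
  linear_combination hQ / 4
end

section
/- For every c > 0, the cubic polynomial p(x) = x³ − (1 + c²/2)x − c/4 has exactly one positive real root ρ*(c); moreover this root satisfies ρ*(c) > 1. -/
/-- For `b > 0`, the cubic `x³ − a x − b` has at most one positive root. -/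
theorem depressed_cubic_pos_root_unique {a b x y : ℝ} (hb : 0 < b) (hx : 0 < x) (hy : 0 < y)
    (hpx : x ^ 3 - a * x - b = 0) (hpy : y ^ 3 - a * y - b = 0) : x = y := by
  have h : (x - y) * (x * y * (x + y) + b) = 0 := by
    linear_combination y * hpx - x * hpy
  have hpos : x * y * (x + y) + b ≠ 0 := by positivity
  exact sub_eq_zero.mp ((mul_eq_zero.mp h).resolve_right hpos)

/-- For every `c > 0`, the cubic `x³ − (1 + c²/2)x − c/4` has exactly one positive
real root, and this root is greater than `1`. -/
theorem cubic_unique_positive_root (c : ℝ) (hc : 0 < c) :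
    (∃! ρ : ℝ, 0 < ρ ∧ ρ ^ 3 - (1 + c ^ 2 / 2) * ρ - c / 4 = 0) ∧
    (∀ ρ : ℝ, 0 < ρ → ρ ^ 3 - (1 + c ^ 2 / 2) * ρ - c / 4 = 0 → 1 < ρ) := by
  constructor
  · have hcont : ContinuousOn (fun x : ℝ => x ^ 3 - (1 + c ^ 2 / 2) * x - c / 4)
        (Set.Icc 0 (1 + c)) := by fun_prop
    have hmem : (0 : ℝ) ∈ Set.Ioo ((0 : ℝ) ^ 3 - (1 + c ^ 2 / 2) * 0 - c / 4)
        ((1 + c) ^ 3 - (1 + c ^ 2 / 2) * (1 + c) - c / 4) := by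
      constructor
      · linarith
      · have : 0 < 7 / 4 * c + 5 / 2 * c ^ 2 + c ^ 3 / 2 := by positivity
        linarith
    obtain ⟨ρ, hρ, hroot⟩ := intermediate_value_Ioo (by positivity) hcont hmem
    exact ⟨ρ, ⟨hρ.1, hroot⟩, fun y hy =>
      depressed_cubic_pos_root_unique (by positivity) hy.1 hρ.1 hy.2 hroot⟩
  · intro ρ hρ hroot
    by_contra! hle
    have hcube : ρ ^ 3 ≤ ρ := pow_le_of_le_one hρ.le hle (by norm_num)
    have hpos : 0 < c ^ 2 / 2 * ρ := by positivity
    linarith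
end

section
/- Let ρ*(c) denote the unique positive root of x³ − (1 + c²/2)x − c/4 for c > 0. Then ρ*(c)/c → 1/√2 as c → ∞ (note (√2/4)^{1/3} = 1/√2), and the corresponding magnetisation amplitude satisfies (1 + 2cρ*(c))/c² → √2 as c → ∞; i.e., both the nematic and magnetic order amplitudes grow linearly in c for large c. -/
open Filter Topology

/-- A positive root `x` of `x³ − (1 + c²/2)x − c/4` satisfies
`1/2 ≤ (x/c)² ≤ 1/2 + (3/2)/c²`. -/
theorem sq_div_bounds_of_cubic_root {c x : ℝ} (hc : 0 < c) (hx : 0 < x)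
    (h : x ^ 3 - (1 + c ^ 2 / 2) * x - c / 4 = 0) :
    1 / 2 ≤ (x / c) ^ 2 ∧ (x / c) ^ 2 ≤ 1 / 2 + 3 / 2 * (c ^ 2)⁻¹ := by
  have hfac : x * (x ^ 2 - 1 - c ^ 2 / 2) = c / 4 := by linarith
  have hpos : 0 < x ^ 2 - 1 - c ^ 2 / 2 :=
    pos_of_mul_pos_right (hfac ▸ by positivity) hx.le
  have hcx : c / 2 ≤ x := by nlinarith
  have hle : x ^ 2 - 1 - c ^ 2 / 2 ≤ 1 / 2 :=
    le_of_mul_le_mul_left (by linarith) hx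
  have hc2 : 0 < c ^ 2 := by positivity
  rw [div_pow]
  constructor
  · rw [le_div_iff₀ hc2]
    linarith
  · rw [div_le_iff₀ hc2, add_mul, mul_assoc, inv_mul_cancel₀ hc2.ne']
    linarith

/-- Asymptotics of the unique positive root `ρ*(c)` of `x³ − (1 + c²/2)x − c/4`
as `c → ∞`: `ρ*(c)/c → 1/√2` and the squared magnetisation amplitude satisfies
`(1 + 2cρ*(c))/c² → √2`. -/
theorem rhoStar_asymptotics_c_to_infty (ρStar : ℝ → ℝ)
    (hρ : ∀ c : ℝ, 0 < c → 0 < ρStar c ∧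
      (ρStar c) ^ 3 - (1 + c ^ 2 / 2) * ρStar c - c / 4 = 0) :
    Tendsto (fun c => ρStar c / c) atTop (𝓝 (1 / Real.sqrt 2)) ∧
    Tendsto (fun c => (1 + 2 * c * ρStar c) / c ^ 2) atTop (𝓝 (Real.sqrt 2)) := by
  have hinv : Tendsto (fun c : ℝ => (c ^ 2)⁻¹) atTop (𝓝 0) :=
    tendsto_inv_atTop_zero.comp (tendsto_pow_atTop two_ne_zero)
  have hsq : Tendsto (fun c => (ρStar c / c) ^ 2) atTop (𝓝 (1 / 2)) := by
    have hupper : Tendsto (fun c : ℝ => 1 / 2 + 3 / 2 * (c ^ 2)⁻¹) atTop (𝓝 (1 / 2)) := by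
      simpa using (hinv.const_mul (3 / 2 : ℝ)).const_add (1 / 2 : ℝ)
    refine tendsto_of_tendsto_of_tendsto_of_le_of_le' tendsto_const_nhds hupper ?_ ?_ <;>
      filter_upwards [eventually_gt_atTop 0] with c hc
    · exact (sq_div_bounds_of_cubic_root hc (hρ c hc).1 (hρ c hc).2).1
    · exact (sq_div_bounds_of_cubic_root hc (hρ c hc).1 (hρ c hc).2).2
  have hratio : Tendsto (fun c => ρStar c / c) atTop (𝓝 (1 / Real.sqrt 2)) := by
    have hsqrt := hsq.sqrt
    rw [Real.sqrt_div zero_le_one, Real.sqrt_one] at hsqrt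
    refine hsqrt.congr' ?_
    filter_upwards [eventually_gt_atTop 0] with c hc
    exact Real.sqrt_sq (div_pos (hρ c hc).1 hc).le
  refine ⟨hratio, ?_⟩
  have hsum := hinv.add (hratio.const_mul 2)
  rw [zero_add, mul_one_div, Real.div_sqrt] at hsum
  refine hsum.congr' ?_
  filter_upwards [eventually_gt_atTop 0] with c hc
  field_simp
end

section
/- Maximum principle: let l > 0, c > 0, and let Q₁₁, Q₁₂, M₁, M₂ : ℝ → ℝ be twice continuously differentiable on [−1,1], satisfy on (−1,1) the system l·Q₁₁'' = 4Q₁₁(Q₁₁²+Q₁₂²−1) − c(M₁²−M₂²), l·Q₁₂'' = 4Q₁₂(Q₁₁²+Q₁₂²−1) − 2cM₁M₂, l·M₁'' = M₁(M₁²+M₂²−1) − 2cQ₁₁M₁ − 2cQ₁₂M₂, l·M₂'' = M₂(M₁²+M₂²−1) + 2cQ₁₁M₂ − 2cQ₁₂M₁, and satisfy the boundary conditions Q₁₁(−1)=M₁(−1)=1, Q₁₁(1)=M₁(1)=−1, Q₁₂(−1)=Q₁₂(1)=M₂(−1)=M₂(1)=0. Then for all y ∈ [−1,1]: Q₁₁(y)²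 + Q₁₂(y)² ≤ ρ*(c)² and M₁(y)² + M₂(y)² ≤ 1 + 2c·ρ*(c). -/
open Set

/-- Necessary second-order condition at a local maximum. -/
theorem IsLocalMax.deriv_deriv_nonpos {f : ℝ → ℝ} {x : ℝ} (h : IsLocalMax f x)
    (hf : ContinuousAt f x) : deriv (deriv f) x ≤ 0 := by
  by_contra! hpos
  have hmin : IsLocalMin f x := isLocalMin_of_deriv_deriv_pos hpos h.deriv_eq_zero hf
  have hconst : f =ᶠ[nhds x] fun _ => f x := by
    filter_upwards [h, hmin] with y hy hy' using le_antisymm hy hy'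
  rw [hconst.deriv.deriv_eq] at hpos
  simp at hpos

/-- At a local maximum of `f ^ 2 + g ^ 2`, the vector `(f, g)` has nonpositive inner product
with its second derivative. -/
theorem mul_deriv_deriv_add_nonpos_of_isLocalMax {f g : ℝ → ℝ} {x : ℝ}
    (hf : ContDiffAt ℝ 2 f x) (hg : ContDiffAt ℝ 2 g x)
    (h : IsLocalMax (fun y => f y ^ 2 + g y ^ 2) x) :
    f x * deriv (deriv f) x + g x * deriv (deriv g) x ≤ 0 := by
  have key := h.deriv_deriv_nonpos ((hf.continuousAt.pow 2).add (hg.continuousAt.pow 2))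
  have hd : deriv (fun y => f y ^ 2 + g y ^ 2) =ᶠ[nhds x]
      fun y => 2 * (f y * deriv f y) + 2 * (g y * deriv g y) := by
    filter_upwards [hf.eventually (by simp), hg.eventually (by simp)] with y hfy hgy
    have hf' := (hfy.differentiableAt (by norm_num)).hasDerivAt
    have hg' := (hgy.differentiableAt (by norm_num)).hasDerivAt
    rw [((hf'.fun_pow 2).fun_add (hg'.fun_pow 2)).deriv]
    norm_num
    ring
  have hf' := (hf.differentiableAt (by norm_num)).hasDerivAt
  have hg' := (hg.differentiableAt (by norm_num)).hasDerivAt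
  have hf'' := ((hf.derivWithin (m := 1) (by norm_num)).differentiableAt (by norm_num)).hasDerivAt
  have hg'' := ((hg.derivWithin (m := 1) (by norm_num)).differentiableAt (by norm_num)).hasDerivAt
  rw [hd.deriv_eq, (((hf'.fun_mul hf'').const_mul 2).fun_add
    ((hg'.fun_mul hg'').const_mul 2)).deriv] at key
  nlinarith [sq_nonneg (deriv f x), sq_nonneg (deriv g x)]

/-- The squared norm of a `C²` planar curve on a compact interval is maximal either at an
endpoint or at an interior point where the second-order condition holds. -/
theorem exists_isMaxOn_sq_add_sq {f g : ℝ → ℝ} {a b : ℝ} (hab : a ≤ b)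
    (hf : ContDiffOn ℝ 2 f (Icc a b)) (hg : ContDiffOn ℝ 2 g (Icc a b)) :
    ∃ x ∈ Icc a b, IsMaxOn (fun y => f y ^ 2 + g y ^ 2) (Icc a b) x ∧
      (x = a ∨ x = b ∨
        x ∈ Ioo a b ∧ f x * deriv (deriv f) x + g x * deriv (deriv g) x ≤ 0) := by
  obtain ⟨x, hx, hmax⟩ := isCompact_Icc.exists_isMaxOn (nonempty_Icc.2 hab)
    ((hf.continuousOn.pow 2).add (hg.continuousOn.pow 2))
  refine ⟨x, hx, hmax, ?_⟩
  rcases eq_or_lt_of_le hx.1 with h | hax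
  · exact Or.inl h.symm
  rcases eq_or_lt_of_le hx.2 with h | hxb
  · exact Or.inr (Or.inl h)
  have hnhds : Icc a b ∈ nhds x := Icc_mem_nhds hax hxb
  exact Or.inr (Or.inr ⟨⟨hax, hxb⟩, mul_deriv_deriv_add_nonpos_of_isLocalMax
    (hf.contDiffAt hnhds) (hg.contDiffAt hnhds) (hmax.isLocalMax hnhds)⟩)

/-- Cauchy–Schwarz bound for the nemato-magnetic coupling term. -/
theorem coupling_le_s9 {q₁ q₂ m₁ m₂ R : ℝ} (hR : 0 ≤ R) (hq : q₁ ^ 2 + q₂ ^ 2 ≤ R ^ 2) :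
    q₁ * (m₁ ^ 2 - m₂ ^ 2) + 2 * q₂ * m₁ * m₂ ≤ R * (m₁ ^ 2 + m₂ ^ 2) := by
  refine abs_le_of_sq_le_sq' ?_ (by positivity) |>.2
  nlinarith [sq_nonneg (q₁ * (2 * m₁ * m₂) - q₂ * (m₁ ^ 2 - m₂ ^ 2)),
    mul_le_mul_of_nonneg_right hq (sq_nonneg (m₁ ^ 2 + m₂ ^ 2))]

/-- Maximum principle for solutions of the ferronematic Euler–Lagrange system:
`|Q|² ≤ ρ*(c)²` and `|M|² ≤ 1 + 2cρ*(c)`, where `ρ*(c)` is the unique positive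
root of `x³ − (1 + c²/2)x − c/4`. -/
theorem ferro_maximum_principle (l c ρStar : ℝ) (hl : 0 < l) (hc : 0 < c)
    (hρpos : 0 < ρStar)
    (hρroot : ρStar ^ 3 - (1 + c ^ 2 / 2) * ρStar - c / 4 = 0)
    (Q11 Q12 M1 M2 : ℝ → ℝ)
    (hQ11 : ContDiffOn ℝ 2 Q11 (Icc (-1) 1))
    (hQ12 : ContDiffOn ℝ 2 Q12 (Icc (-1) 1))
    (hM1 : ContDiffOn ℝ 2 M1 (Icc (-1) 1))
    (hM2 : ContDiffOn ℝ 2 M2 (Icc (-1) 1))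
    (hode1 : ∀ y ∈ Ioo (-1 : ℝ) 1, l * deriv (deriv Q11) y =
      4 * Q11 y * ((Q11 y) ^ 2 + (Q12 y) ^ 2 - 1) - c * ((M1 y) ^ 2 - (M2 y) ^ 2))
    (hode2 : ∀ y ∈ Ioo (-1 : ℝ) 1, l * deriv (deriv Q12) y =
      4 * Q12 y * ((Q11 y) ^ 2 + (Q12 y) ^ 2 - 1) - 2 * c * M1 y * M2 y)
    (hode3 : ∀ y ∈ Ioo (-1 : ℝ) 1, l * deriv (deriv M1) y =
      M1 y * ((M1 y) ^ 2 + (M2 y) ^ 2 - 1) - 2 * c * Q11 y * M1 y - 2 * c * Q12 y * M2 y)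
    (hode4 : ∀ y ∈ Ioo (-1 : ℝ) 1, l * deriv (deriv M2) y =
      M2 y * ((M1 y) ^ 2 + (M2 y) ^ 2 - 1) + 2 * c * Q11 y * M2 y - 2 * c * Q12 y * M1 y)
    (hbc1 : Q11 (-1) = 1) (hbc2 : M1 (-1) = 1)
    (hbc3 : Q11 1 = -1) (hbc4 : M1 1 = -1)
    (hbc5 : Q12 (-1) = 0) (hbc6 : Q12 1 = 0)
    (hbc7 : M2 (-1) = 0) (hbc8 : M2 1 = 0) :
    ∀ y ∈ Icc (-1 : ℝ) 1,
      (Q11 y) ^ 2 + (Q12 y) ^ 2 ≤ ρStar ^ 2 ∧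
      (M1 y) ^ 2 + (M2 y) ^ 2 ≤ 1 + 2 * c * ρStar := by
  obtain ⟨x, hx, hxmax, hxc⟩ := exists_isMaxOn_sq_add_sq (by norm_num) hQ11 hQ12
  obtain ⟨z, hz, hzmax, hzc⟩ := exists_isMaxOn_sq_add_sq (by norm_num) hM1 hM2
  rw [isMaxOn_iff] at hxmax hzmax
  obtain ⟨R, hR, hRsq⟩ : ∃ R, 0 ≤ R ∧ R ^ 2 = Q11 x ^ 2 + Q12 x ^ 2 :=
    ⟨√(Q11 x ^ 2 + Q12 x ^ 2), Real.sqrt_nonneg _, Real.sq_sqrt (by positivity)⟩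
  have hQ : ∀ y ∈ Icc (-1 : ℝ) 1, Q11 y ^ 2 + Q12 y ^ 2 ≤ R ^ 2 := fun y hy => by
    rw [hRsq]; exact hxmax y hy
  have hMz : M1 z ^ 2 + M2 z ^ 2 ≤ 1 + 2 * c * R := by
    have hcR : 0 ≤ 2 * c * R := by positivity
    rcases hzc with rfl | rfl | ⟨hzi, hle⟩
    · rw [hbc2, hbc7]; linarith
    · rw [hbc4, hbc8]; linarith
    · have hcoup := mul_le_mul_of_nonneg_left
        (coupling_le_s9 (m₁ := M1 z) (m₂ := M2 z) hR (hQ z hz)) hc.le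
      have hprod : (M1 z ^ 2 + M2 z ^ 2) * (M1 z ^ 2 + M2 z ^ 2 - (1 + 2 * c * R)) ≤ 0 := by
        linear_combination l * hle + 2 * hcoup - M1 z * hode3 z hzi - M2 z * hode4 z hzi
      by_contra! hlt
      nlinarith [mul_pos (by linarith : 0 < M1 z ^ 2 + M2 z ^ 2) (sub_pos.2 hlt)]
  have hM : ∀ y ∈ Icc (-1 : ℝ) 1, M1 y ^ 2 + M2 y ^ 2 ≤ 1 + 2 * c * R :=
    fun y hy => (hzmax y hy).trans hMz
  have hcubic : 4 * R * (R * (R ^ 2 - 1)) ≤ c * R * (1 + 2 * c * R) := by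
    have hrhs : 0 ≤ c * R * (1 + 2 * c * R) := by positivity
    rcases hxc with rfl | rfl | ⟨hxi, hle⟩
    · rw [hbc1, hbc5] at hRsq
      rw [hRsq]; linarith
    · rw [hbc3, hbc6] at hRsq
      rw [hRsq]; linarith
    · have hcoup := mul_le_mul_of_nonneg_left
        (coupling_le_s9 (m₁ := M1 x) (m₂ := M2 x) hR (hQ x hx)) hc.le
      have hm := mul_le_mul_of_nonneg_left (hM x hx) (mul_nonneg hc.le hR)
      have hode : 4 * R ^ 2 * (R ^ 2 - 1) ≤
          c * (Q11 x * (M1 x ^ 2 - M2 x ^ 2) + 2 * Q12 x * M1 x * M2 x) := by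
        rw [hRsq]
        linear_combination l * hle - Q11 x * hode1 x hxi - Q12 x * hode2 x hxi
      linarith
  have hRρ : R ≤ ρStar := by
    by_contra! hlt
    have hRpos := hρpos.trans hlt
    have hp : R ^ 3 - (1 + c ^ 2 / 2) * R - c / 4 ≤ 0 := by
      by_contra! hp
      nlinarith [mul_pos hRpos hp]
    have hs : 0 < ρStar ^ 2 - (1 + c ^ 2 / 2) := by
      by_contra! hs
      nlinarith [mul_nonneg hρpos.le (sub_nonneg.2 hs)]
    nlinarith [mul_pos (sub_pos.2 hlt) hs,
      mul_pos (sub_pos.2 hlt) (mul_pos hRpos (add_pos hRpos hρpos))]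
  intro y hy
  refine ⟨(hQ y hy).trans (by gcongr), (hM y hy).trans (by gcongr)⟩
end

section
/- Convergence to the linear order-reconstruction profile as l → ∞: for every c > 0 there exist constants α₁ > 0 and α₂ > 0, depending only on c, such that for every l > 0 and every quadruple (Q₁₁, Q₁₂, M₁, M₂) of functions twice continuously differentiable on [−1,1] satisfying on (−1,1) the system l·Q₁₁'' = 4Q₁₁(Q₁₁²+Q₁₂²−1) − c(M₁²−M₂²), l·Q₁₂'' = 4Q₁₂(Q₁₁²+Q₁₂²−1) − 2cM₁M₂, l·M₁'' = M₁(M₁²+M₂²−1) − 2cQ₁₁M₁ − 2cQ₁₂M₂, l·M₂'' = M₂(M₁²+M₂²−1) + 2cQ₁₁M₂ − 2cQ₁₂M₁, with boundary conditions Q₁₁(−1)=M₁(−1)=1, Q₁₁(1)=M₁(1)=−1, Q₁₂(±1)=M₂(±1)=0, one has for all y ∈ [−1,1]: |Q₁₁(y) + y| ≤ α₁/l, |Q₁₂(y)| ≤ α₁/l, |M₁(y) + y| ≤ α₂/l, and |M₂(y)| ≤ α₂/l. -/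
open Set

/-- A quadruple `(Q11, Q12, M1, M2)` is a classical solution of the ferronematic
Euler–Lagrange system on `[−1,1]` with elastic constant `l`, coupling `c` and
`ξ = 1`, with the given Dirichlet boundary conditions. -/
def FerroSolution (l c : ℝ) (Q11 Q12 M1 M2 : ℝ → ℝ) : Prop :=
  ContDiffOn ℝ 2 Q11 (Icc (-1) 1) ∧ ContDiffOn ℝ 2 Q12 (Icc (-1) 1) ∧
  ContDiffOn ℝ 2 M1 (Icc (-1) 1) ∧ ContDiffOn ℝ 2 M2 (Icc (-1) 1) ∧
  (∀ y ∈ Ioo (-1 : ℝ) 1, l * deriv (deriv Q11) y =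
    4 * Q11 y * ((Q11 y) ^ 2 + (Q12 y) ^ 2 - 1) - c * ((M1 y) ^ 2 - (M2 y) ^ 2)) ∧
  (∀ y ∈ Ioo (-1 : ℝ) 1, l * deriv (deriv Q12) y =
    4 * Q12 y * ((Q11 y) ^ 2 + (Q12 y) ^ 2 - 1) - 2 * c * M1 y * M2 y) ∧
  (∀ y ∈ Ioo (-1 : ℝ) 1, l * deriv (deriv M1) y =
    M1 y * ((M1 y) ^ 2 + (M2 y) ^ 2 - 1) - 2 * c * Q11 y * M1 y - 2 * c * Q12 y * M2 y) ∧
  (∀ y ∈ Ioo (-1 : ℝ) 1, l * deriv (deriv M2) y =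
    M2 y * ((M1 y) ^ 2 + (M2 y) ^ 2 - 1) + 2 * c * Q11 y * M2 y - 2 * c * Q12 y * M1 y) ∧
  Q11 (-1) = 1 ∧ M1 (-1) = 1 ∧ Q11 1 = -1 ∧ M1 1 = -1 ∧
  Q12 (-1) = 0 ∧ Q12 1 = 0 ∧ M2 (-1) = 0 ∧ M2 1 = 0

/-- Maximum principle: a function on `[-1,1]` that is at most `R` at the end points and strictly
convex wherever it exceeds `R` is at most `R`. -/
theorem le_of_deriv2_pos_of_lt {f f' f'' : ℝ → ℝ} {R : ℝ} (hf : ContinuousOn f (Icc (-1) 1))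
    (hf' : ∀ y ∈ Ioo (-1 : ℝ) 1, HasDerivAt f (f' y) y)
    (hf'' : ∀ y ∈ Ioo (-1 : ℝ) 1, HasDerivAt f' (f'' y) y)
    (hpos : ∀ y ∈ Ioo (-1 : ℝ) 1, R < f y → 0 < f'' y)
    (hleft : f (-1) ≤ R) (hright : f 1 ≤ R) : ∀ y ∈ Icc (-1 : ℝ) 1, f y ≤ R := by
  obtain ⟨x, hx, hmax⟩ := isCompact_Icc.exists_isMaxOn (nonempty_Icc.2 (by norm_num)) hf
  refine fun y hy => (hmax hy).trans ?_
  by_contra! hlt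
  have hx' : x ∈ Ioo (-1 : ℝ) 1 := by
    refine ⟨lt_of_le_of_ne hx.1 ?_, lt_of_le_of_ne hx.2 ?_⟩
    · rintro rfl
      exact absurd hleft hlt.not_ge
    · rintro rfl
      exact absurd hright hlt.not_ge
  have hd : deriv f =ᶠ[nhds x] f' := by
    filter_upwards [Ioo_mem_nhds hx'.1 hx'.2] with z hz using (hf' z hz).deriv
  have hdd : deriv (deriv f) x = f'' x := by rw [hd.deriv_eq, (hf'' x hx').deriv]
  have hlmax : IsLocalMax f x := hmax.isLocalMax (Icc_mem_nhds hx'.1 hx'.2)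
  have hlmin : IsLocalMin f x := isLocalMin_of_deriv_deriv_pos
    (hdd ▸ hpos x hx' hlt) hlmax.deriv_eq_zero (hf' x hx').continuousAt
  have hconst : f =ᶠ[nhds x] fun _ => f x := by
    filter_upwards [hlmax, hlmin] with z h₁ h₂ using le_antisymm h₁ h₂
  have hzero : deriv (deriv f) x = 0 := by
    rw [hconst.deriv.deriv_eq]
    simp
  have := hpos x hx' hlt
  linarith

/-- A function vanishing at `±1` with second derivative greater than `-K` is at most `K / 2`. -/
theorem le_half_of_neg_lt_deriv2 {f f' f'' : ℝ → ℝ} {K : ℝ} (hK : 0 ≤ K)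
    (hf : ContinuousOn f (Icc (-1) 1))
    (hf' : ∀ y ∈ Ioo (-1 : ℝ) 1, HasDerivAt f (f' y) y)
    (hf'' : ∀ y ∈ Ioo (-1 : ℝ) 1, HasDerivAt f' (f'' y) y)
    (hlow : ∀ y ∈ Ioo (-1 : ℝ) 1, -K < f'' y)
    (hleft : f (-1) = 0) (hright : f 1 = 0) : ∀ y ∈ Icc (-1 : ℝ) 1, f y ≤ K / 2 := by
  intro y hy
  have key := le_of_deriv2_pos_of_lt (f := fun y => f y + K / 2 * y ^ 2)
    (f' := fun y => f' y + K * y) (f'' := fun y => f'' y + K) (R := K / 2)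
    (hf.add (by fun_prop))
    (fun z hz => ((hf' z hz).add ((hasDerivAt_pow 2 z).const_mul (K / 2))).congr_deriv
      (by norm_num; ring))
    (fun z hz => ((hf'' z hz).add ((hasDerivAt_id z).const_mul K)).congr_deriv (by simp))
    (fun z hz _ => by linarith [hlow z hz]) (by simp [hleft]) (by simp [hright]) y hy
  have := mul_nonneg hK (sq_nonneg y)
  linarith

/-- A `C²` function on `[-1,1]` with `|l u''| < C` is within `C / l` of an affine function with the
same boundary values. -/
theorem abs_sub_affine_le_div {u : ℝ → ℝ} {l C a b : ℝ} (hl : 0 < l)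
    (hu : ContinuousOn u (Icc (-1) 1))
    (hu' : ∀ y ∈ Ioo (-1 : ℝ) 1, HasDerivAt u (deriv u y) y)
    (hu'' : ∀ y ∈ Ioo (-1 : ℝ) 1, HasDerivAt (deriv u) (deriv (deriv u) y) y)
    (hC : ∀ y ∈ Ioo (-1 : ℝ) 1, |l * deriv (deriv u) y| < C)
    (hleft : u (-1) = -a + b) (hright : u 1 = a + b) :
    ∀ y ∈ Icc (-1 : ℝ) 1, |u y - (a * y + b)| ≤ C / l := by
  intro y hy
  have hC0 : 0 < C := (abs_nonneg _).trans_lt (hC 0 (by norm_num))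
  have hK : 0 < C / l := div_pos hC0 hl
  have hbound : ∀ z ∈ Ioo (-1 : ℝ) 1, |deriv (deriv u) z| < C / l := fun z hz => by
    rw [lt_div_iff₀ hl, mul_comm, ← abs_of_pos hl, ← abs_mul]
    exact abs_of_pos hl ▸ hC z hz
  have hv : ContinuousOn (fun z => u z - (a * z + b)) (Icc (-1) 1) := hu.sub (by fun_prop)
  have hv' : ∀ z ∈ Ioo (-1 : ℝ) 1,
      HasDerivAt (fun z => u z - (a * z + b)) (deriv u z - a) z := fun z hz =>
    ((hu' z hz).sub (((hasDerivAt_id z).const_mul a).add_const b)).congr_deriv (by simp)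
  have hv'' : ∀ z ∈ Ioo (-1 : ℝ) 1,
      HasDerivAt (fun z => deriv u z - a) (deriv (deriv u) z) z := fun z hz =>
    (hu'' z hz).sub_const a
  have hup := le_half_of_neg_lt_deriv2 hK.le hv hv' hv''
    (fun z hz => (abs_lt.1 (hbound z hz)).1) (by simp [hleft]) (by simp [hright]) y hy
  have hlow := le_half_of_neg_lt_deriv2 hK.le hv.neg (fun z hz => (hv' z hz).neg)
    (fun z hz => (hv'' z hz).neg) (fun z hz => by
      have := (abs_lt.1 (hbound z hz)).2
      linarith) (by simp [hleft]) (by simp [hright]) y hy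
  simp only [Pi.neg_apply] at hup hlow
  rw [abs_le]
  constructor <;> linarith

theorem ContDiffOn.hasDerivAt_deriv_Ioo {u : ℝ → ℝ} {a b : ℝ} (hu : ContDiffOn ℝ 2 u (Icc a b)) :
    ∀ y ∈ Ioo a b, HasDerivAt u (deriv u y) y := fun y hy =>
  ((hu.contDiffAt (Icc_mem_nhds hy.1 hy.2)).differentiableAt (by norm_num)).hasDerivAt

theorem ContDiffOn.hasDerivAt_deriv2_Ioo {u : ℝ → ℝ} {a b : ℝ} (hu : ContDiffOn ℝ 2 u (Icc a b)) :
    ∀ y ∈ Ioo a b, HasDerivAt (deriv u) (deriv (deriv u) y) y := fun y hy =>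
  (((hu.mono Ioo_subset_Icc_self).deriv_of_isOpen (m := 1) isOpen_Ioo (by norm_num)).contDiffAt
    (Ioo_mem_nhds hy.1 hy.2)).differentiableAt (by norm_num) |>.hasDerivAt

/-- The reaction term, tested against the solution, is positive far from the origin. -/
theorem ferro_reaction_pos {c p q m n : ℝ} (h : 16 + 18 * c ^ 2 < p ^ 2 + q ^ 2 + m ^ 2 + n ^ 2) :
    0 < p * (4 * p * (p ^ 2 + q ^ 2 - 1) - c * (m ^ 2 - n ^ 2)) +
      q * (4 * q * (p ^ 2 + q ^ 2 - 1) - 2 * c * m * n) +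
      m * (m * (m ^ 2 + n ^ 2 - 1) - 2 * c * p * m - 2 * c * q * n) +
      n * (n * (m ^ 2 + n ^ 2 - 1) + 2 * c * p * n - 2 * c * q * m) := by
  have hcoupling : 3 * c * (p * (m ^ 2 - n ^ 2) + 2 * q * m * n) ≤
      (m ^ 2 + n ^ 2) ^ 2 / 2 + 9 * c ^ 2 * (p ^ 2 + q ^ 2) / 2 := by
    linarith [sq_nonneg (m ^ 2 - n ^ 2 - 3 * c * p), sq_nonneg (2 * m * n - 3 * c * q)]
  have hs : 0 ≤ p ^ 2 + q ^ 2 := by positivity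
  have ht : 0 ≤ m ^ 2 + n ^ 2 := by positivity
  have hst : 16 + 18 * c ^ 2 < (p ^ 2 + q ^ 2) + (m ^ 2 + n ^ 2) := by linarith
  have hpoly : 0 < 4 * (p ^ 2 + q ^ 2) ^ 2 - 4 * (p ^ 2 + q ^ 2) + (m ^ 2 + n ^ 2) ^ 2 / 2
      - (m ^ 2 + n ^ 2) - 9 * c ^ 2 * (p ^ 2 + q ^ 2) / 2 := by
    generalize p ^ 2 + q ^ 2 = s at hs hst
    generalize m ^ 2 + n ^ 2 = t at ht hst
    have hsum : 0 < s + t := lt_trans (by positivity) hst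
    nlinarith [mul_lt_mul_of_pos_right hst hsum, sq_nonneg (s - t), mul_nonneg (sq_nonneg c) ht,
      sq_nonneg s]
  linarith

namespace FerroSolution

variable {l c : ℝ} {Q11 Q12 M1 M2 : ℝ → ℝ}

/-- The a priori bound, uniform in `l`. -/
theorem normSq_le (hl : 0 < l) (h : FerroSolution l c Q11 Q12 M1 M2) :
    ∀ y ∈ Icc (-1 : ℝ) 1,
      Q11 y ^ 2 + Q12 y ^ 2 + M1 y ^ 2 + M2 y ^ 2 ≤ 16 + 18 * c ^ 2 := by
  obtain ⟨hp, hq, hm, hn, ep, eq, em, en, p₀, m₀, p₁, m₁, q₀, q₁, n₀, n₁⟩ := h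
  have hsq' : ∀ {u : ℝ → ℝ}, ContDiffOn ℝ 2 u (Icc (-1) 1) → ∀ y ∈ Ioo (-1 : ℝ) 1,
      HasDerivAt (fun z => u z ^ 2) (2 * (u y * deriv u y)) y := fun hu y hy =>
    ((hu.hasDerivAt_deriv_Ioo y hy).pow 2).congr_deriv (by norm_num; ring)
  have hsq'' : ∀ {u : ℝ → ℝ}, ContDiffOn ℝ 2 u (Icc (-1) 1) → ∀ y ∈ Ioo (-1 : ℝ) 1,
      HasDerivAt (fun z => 2 * (u z * deriv u z))
        (2 * (deriv u y ^ 2 + u y * deriv (deriv u) y)) y := fun hu y hy =>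
    (((hu.hasDerivAt_deriv_Ioo y hy).mul (hu.hasDerivAt_deriv2_Ioo y hy)).const_mul 2).congr_deriv
      (by ring)
  refine le_of_deriv2_pos_of_lt
    ((((hp.continuousOn.pow 2).add (hq.continuousOn.pow 2)).add (hm.continuousOn.pow 2)).add
      (hn.continuousOn.pow 2))
    (fun y hy => (((hsq' hp y hy).add (hsq' hq y hy)).add (hsq' hm y hy)).add (hsq' hn y hy))
    (fun y hy => (((hsq'' hp y hy).add (hsq'' hq y hy)).add (hsq'' hm y hy)).add (hsq'' hn y hy))
    (fun y hy hlt => ?_) ?_ ?_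
  · have hreact := ferro_reaction_pos hlt
    rw [← ep y hy, ← eq y hy, ← em y hy, ← en y hy] at hreact
    have hpos : 0 < Q11 y * deriv (deriv Q11) y + Q12 y * deriv (deriv Q12) y +
        M1 y * deriv (deriv M1) y + M2 y * deriv (deriv M2) y :=
      pos_of_mul_pos_right (by linarith) hl.le
    linarith [sq_nonneg (deriv Q11 y), sq_nonneg (deriv Q12 y), sq_nonneg (deriv M1 y),
      sq_nonneg (deriv M2 y)]
  · simp only [p₀, q₀, m₀, n₀]
    nlinarith [sq_nonneg c]
  · simp only [p₁, q₁, m₁, n₁]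
    nlinarith [sq_nonneg c]

end FerroSolution

/-- If `x ^ 2 ≤ s ≤ R`, then `x (s - 1)` is bounded by `R ^ 2`. -/
theorem abs_mul_sub_one_le {x s R : ℝ} (hR : 1 ≤ R) (hx : x ^ 2 ≤ s) (hs : s ≤ R) :
    |x * (s - 1)| ≤ R ^ 2 := by
  have hxR : |x| ≤ R := abs_le_of_sq_le_sq (by nlinarith) (by linarith)
  have hsR : |s - 1| ≤ R := abs_le.2 ⟨by nlinarith [sq_nonneg x], by linarith⟩
  rw [abs_mul, sq]
  exact mul_le_mul hxR hsR (abs_nonneg _) (by linarith)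

/-- Convergence to the linear order-reconstruction profile `(−y, 0, −y, 0)` as the
elastic constant `l → ∞`, at rate `1/l`. -/
theorem ferro_convergence_to_linear_profile (c : ℝ) (hc : 0 < c) :
    ∃ α₁ : ℝ, 0 < α₁ ∧ ∃ α₂ : ℝ, 0 < α₂ ∧
      ∀ l : ℝ, 0 < l → ∀ Q11 Q12 M1 M2 : ℝ → ℝ,
        FerroSolution l c Q11 Q12 M1 M2 →
        ∀ y ∈ Icc (-1 : ℝ) 1,
          |Q11 y + y| ≤ α₁ / l ∧ |Q12 y| ≤ α₁ / l ∧
          |M1 y + y| ≤ α₂ / l ∧ |M2 y| ≤ α₂ / l := by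
  obtain ⟨R, hR⟩ : ∃ R : ℝ, R = 16 + 18 * c ^ 2 := ⟨_, rfl⟩
  have hR1 : 1 ≤ R := by nlinarith [sq_nonneg c]
  have hC : 0 < 4 * R ^ 2 + c * R + 1 := by positivity
  refine ⟨4 * R ^ 2 + c * R + 1, hC, 4 * R ^ 2 + c * R + 1, hC, ?_⟩
  intro l hl Q11 Q12 M1 M2 h y hy
  have hbound := h.normSq_le hl
  rw [← hR] at hbound
  obtain ⟨hp, hq, hm, hn, ep, eq, em, en, p₀, m₀, p₁, m₁, q₀, q₁, n₀, n₁⟩ := h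
  have affine : ∀ {u : ℝ → ℝ} {a : ℝ}, ContDiffOn ℝ 2 u (Icc (-1) 1) →
      (∀ z ∈ Ioo (-1 : ℝ) 1, |l * deriv (deriv u) z| < 4 * R ^ 2 + c * R + 1) →
      u (-1) = -a → u 1 = a → |u y - a * y| ≤ (4 * R ^ 2 + c * R + 1) / l := by
    intro u a hu hlt hleft hright
    simpa using abs_sub_affine_le_div (b := 0) hl hu.continuousOn hu.hasDerivAt_deriv_Ioo
      hu.hasDerivAt_deriv2_Ioo hlt (by simpa using hleft) (by simpa using hright) y hy
  have coupling : ∀ {t : ℝ}, |t| ≤ R → |c * t| ≤ c * R := fun ht => by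
    rw [abs_mul, abs_of_pos hc]
    exact mul_le_mul_of_nonneg_left ht hc.le
  have hR2 : 0 ≤ R ^ 2 := sq_nonneg R
  refine ⟨?_, ?_, ?_, ?_⟩
  · have := affine (a := -1) hp (fun z hz => ?_) (by simpa using p₀) p₁
    · simpa using this
    have hb := hbound z (Ioo_subset_Icc_self hz)
    have h₁ := abs_le.1 (abs_mul_sub_one_le (x := Q11 z) (s := Q11 z ^ 2 + Q12 z ^ 2) hR1
      (by nlinarith) (by nlinarith))
    have h₂ := abs_le.1 (coupling (t := M1 z ^ 2 - M2 z ^ 2)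
      (abs_le.2 ⟨by nlinarith, by nlinarith⟩))
    rw [ep z hz, abs_lt]
    constructor <;> linarith
  · have := affine (a := 0) hq (fun z hz => ?_) (by simpa using q₀) q₁
    · simpa using this
    have hb := hbound z (Ioo_subset_Icc_self hz)
    have h₁ := abs_le.1 (abs_mul_sub_one_le (x := Q12 z) (s := Q11 z ^ 2 + Q12 z ^ 2) hR1
      (by nlinarith) (by nlinarith))
    have h₂ := abs_le.1 (coupling (t := 2 * M1 z * M2 z)
      (abs_le.2 ⟨by nlinarith [sq_nonneg (M1 z + M2 z)], by nlinarith [sq_nonneg (M1 z - M2 z)]⟩))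
    rw [eq z hz, abs_lt]
    constructor <;> linarith
  · have := affine (a := -1) hm (fun z hz => ?_) (by simpa using m₀) m₁
    · simpa using this
    have hb := hbound z (Ioo_subset_Icc_self hz)
    have h₁ := abs_le.1 (abs_mul_sub_one_le (x := M1 z) (s := M1 z ^ 2 + M2 z ^ 2) hR1
      (by nlinarith) (by nlinarith))
    have h₂ := abs_le.1 (coupling (t := 2 * Q11 z * M1 z + 2 * Q12 z * M2 z)
      (abs_le.2 ⟨by nlinarith [sq_nonneg (Q11 z + M1 z), sq_nonneg (Q12 z + M2 z)],
        by nlinarith [sq_nonneg (Q11 z - M1 z), sq_nonneg (Q12 z - M2 z)]⟩))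
    rw [em z hz, abs_lt]
    constructor <;> linarith
  · have := affine (a := 0) hn (fun z hz => ?_) (by simpa using n₀) n₁
    · simpa using this
    have hb := hbound z (Ioo_subset_Icc_self hz)
    have h₁ := abs_le.1 (abs_mul_sub_one_le (x := M2 z) (s := M1 z ^ 2 + M2 z ^ 2) hR1
      (by nlinarith) (by nlinarith))
    have h₂ := abs_le.1 (coupling (t := 2 * Q11 z * M2 z - 2 * Q12 z * M1 z)
      (abs_le.2 ⟨by nlinarith [sq_nonneg (Q11 z + M2 z), sq_nonneg (Q12 z - M1 z)],
        by nlinarith [sq_nonneg (Q11 z - M2 z), sq_nonneg (Q12 z + M1 z)]⟩))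
    rw [en z hz, abs_lt]
    constructor <;> linarith
end

section
/- Second variation identity: let l, c ∈ ℝ and let Q*, M*, g, h, v, w : ℝ → ℝ be continuously differentiable on [−1,1]. For t ∈ ℝ define F(t) = ∫_{−1}^{1} [ (l/2)((Q*' + tg')² + t²h'²) + ((Q*+tg)² + t²h² − 1)² + (l/2)((M*' + tv')² + t²w'²) + (1/4)((M*+tv)² + t²w² − 1)² − c(Q*+tg)((M*+tv)² − t²w²) − 2c·(th)·(M*+tv)·(tw) ] dy. Then t ↦ F(t) is twice differentiable and F''(0) = ∫_{−1}^{1} [ l g'² + l v'² + 4(3Q*²−1)g² + (3M*²−1)v² − 4c g M* v − 2c Q* v² ] dy + ∫_{−1}^{1} [ l h'² + l w'² + 4(Q*²−1)h² + (M*²−1)w² + 2c Q* w² − 4c h w M* ] dy. -/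
open Set intervalIntegral

/-- A function that is `C¹` on `[a, b]` agrees on `(a, b)`, together with its derivative, with
continuous functions defined on the whole line. -/
theorem ContDiffOn.exists_continuous_eqOn_Ioo {a b : ℝ} (hab : a < b) {u : ℝ → ℝ}
    (hu : ContDiffOn ℝ 1 u (Icc a b)) :
    ∃ u₀ u₁ : ℝ → ℝ, Continuous u₀ ∧ Continuous u₁ ∧
      EqOn u u₀ (Ioo a b) ∧ EqOn (deriv u) u₁ (Ioo a b) := by
  have hd : ContinuousOn (derivWithin u (Icc a b)) (Icc a b) :=
    hu.continuousOn_derivWithin (uniqueDiffOn_Icc hab) le_rfl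
  refine ⟨IccExtend hab.le ((Icc a b).domRestrict u),
    IccExtend hab.le ((Icc a b).domRestrict (derivWithin u (Icc a b))),
    (continuousOn_iff_continuous_domRestrict.1 hu.continuousOn).Icc_extend',
    (continuousOn_iff_continuous_domRestrict.1 hd).Icc_extend', fun y hy => ?_, fun y hy => ?_⟩
  · rw [IccExtend_of_mem _ _ (Ioo_subset_Icc_self hy), domRestrict_apply]
  · rw [IccExtend_of_mem _ _ (Ioo_subset_Icc_self hy), domRestrict_apply,
      derivWithin_of_mem_nhds (Icc_mem_nhds hy.1 hy.2)]

/-- Interval integrals of functions that agree on the open interval coincide. -/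
theorem intervalIntegral.integral_congr_of_eqOn_Ioo {a b : ℝ} (hab : a ≤ b) {f₁ f₂ : ℝ → ℝ}
    (hf : EqOn f₁ f₂ (Ioo a b)) : ∫ y in a..b, f₁ y = ∫ y in a..b, f₂ y := by
  simp only [integral_of_le hab, MeasureTheory.integral_Ioc_eq_integral_Ioo]
  exact MeasureTheory.setIntegral_congr_fun measurableSet_Ioo hf

/-- The integral of a quartic polynomial in `t` with continuous coefficients is twice
differentiable in `t`, and its second derivative at `0` is twice the integral of the
quadratic coefficient. -/
theorem second_deriv_integral_quartic {a b : ℝ} {a₀ a₁ a₂ a₃ a₄ F : ℝ → ℝ}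
    (h₀ : Continuous a₀) (h₁ : Continuous a₁) (h₂ : Continuous a₂) (h₃ : Continuous a₃)
    (h₄ : Continuous a₄)
    (hF : ∀ t, F t = ∫ y in a..b,
      (a₀ y + t * a₁ y + t ^ 2 * a₂ y + t ^ 3 * a₃ y + t ^ 4 * a₄ y)) :
    (∀ t, DifferentiableAt ℝ F t) ∧ (∀ t, DifferentiableAt ℝ (deriv F) t) ∧
      deriv (deriv F) 0 = ∫ y in a..b, 2 * a₂ y := by
  have hP : F = fun t => (∫ y in a..b, a₀ y) + t * (∫ y in a..b, a₁ y)
      + t ^ 2 * (∫ y in a..b, a₂ y) + t ^ 3 * (∫ y in a..b, a₃ y)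
      + t ^ 4 * (∫ y in a..b, a₄ y) := by
    funext t
    rw [hF, integral_add, integral_add, integral_add, integral_add]
    · simp only [integral_const_mul]
    all_goals exact Continuous.intervalIntegrable (by fun_prop) _ _
  rw [integral_const_mul]
  generalize (∫ y in a..b, a₀ y) = A₀, (∫ y in a..b, a₁ y) = A₁, (∫ y in a..b, a₂ y) = A₂,
    (∫ y in a..b, a₃ y) = A₃, (∫ y in a..b, a₄ y) = A₄ at hP ⊢
  have hd (t : ℝ) : HasDerivAt F (A₁ + 2 * t * A₂ + 3 * t ^ 2 * A₃ + 4 * t ^ 3 * A₄) t := by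
    rw [hP]
    refine HasDerivAt.congr_deriv ((((((hasDerivAt_id t).mul_const A₁).const_add A₀).add
      ((hasDerivAt_pow 2 t).mul_const A₂)).add ((hasDerivAt_pow 3 t).mul_const A₃)).add
      ((hasDerivAt_pow 4 t).mul_const A₄)) ?_
    norm_num
  have hF' : deriv F = fun t => A₁ + 2 * t * A₂ + 3 * t ^ 2 * A₃ + 4 * t ^ 3 * A₄ :=
    funext fun t => (hd t).deriv
  have hd₂ (t : ℝ) : HasDerivAt (deriv F) (2 * A₂ + 6 * t * A₃ + 12 * t ^ 2 * A₄) t := by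
    rw [hF']
    refine HasDerivAt.congr_deriv ((((((hasDerivAt_id t).const_mul 2).mul_const A₂).const_add A₁).add
      (((hasDerivAt_pow 2 t).const_mul 3).mul_const A₃)).add
      (((hasDerivAt_pow 3 t).const_mul 4).mul_const A₄)) ?_
    norm_num
    ring
  exact ⟨fun t => (hd t).differentiableAt, fun t => (hd₂ t).differentiableAt,
    by simpa using (hd₂ 0).deriv⟩

/-- Second variation identity for the ferronematic energy about an
order-reconstruction profile `(Q*, 0, M*, 0)` in the perturbation directions
`(g, h, v, w)`. -/
theorem second_variation_identity (l c : ℝ) (Qs Ms g h v w : ℝ → ℝ)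
    (hQs : ContDiffOn ℝ 1 Qs (Icc (-1) 1)) (hMs : ContDiffOn ℝ 1 Ms (Icc (-1) 1))
    (hg : ContDiffOn ℝ 1 g (Icc (-1) 1)) (hh : ContDiffOn ℝ 1 h (Icc (-1) 1))
    (hv : ContDiffOn ℝ 1 v (Icc (-1) 1)) (hw : ContDiffOn ℝ 1 w (Icc (-1) 1))
    (F : ℝ → ℝ)
    (hF : ∀ t : ℝ, F t = ∫ y in (-1 : ℝ)..1,
      (l / 2 * ((deriv Qs y + t * deriv g y) ^ 2 + t ^ 2 * (deriv h y) ^ 2)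
        + ((Qs y + t * g y) ^ 2 + t ^ 2 * (h y) ^ 2 - 1) ^ 2
        + l / 2 * ((deriv Ms y + t * deriv v y) ^ 2 + t ^ 2 * (deriv w y) ^ 2)
        + 1 / 4 * ((Ms y + t * v y) ^ 2 + t ^ 2 * (w y) ^ 2 - 1) ^ 2
        - c * (Qs y + t * g y) * ((Ms y + t * v y) ^ 2 - t ^ 2 * (w y) ^ 2)
        - 2 * c * (t * h y) * (Ms y + t * v y) * (t * w y))) :
    (∀ t : ℝ, DifferentiableAt ℝ F t) ∧
    (∀ t : ℝ, DifferentiableAt ℝ (deriv F) t) ∧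
    deriv (deriv F) 0 =
      (∫ y in (-1 : ℝ)..1,
        (l * (deriv g y) ^ 2 + l * (deriv v y) ^ 2
          + 4 * (3 * (Qs y) ^ 2 - 1) * (g y) ^ 2 + (3 * (Ms y) ^ 2 - 1) * (v y) ^ 2
          - 4 * c * g y * Ms y * v y - 2 * c * Qs y * (v y) ^ 2))
      + ∫ y in (-1 : ℝ)..1,
        (l * (deriv h y) ^ 2 + l * (deriv w y) ^ 2
          + 4 * ((Qs y) ^ 2 - 1) * (h y) ^ 2 + ((Ms y) ^ 2 - 1) * (w y) ^ 2
          + 2 * c * Qs y * (w y) ^ 2 - 4 * c * h y * w y * Ms y) := by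
  have hlt : (-1 : ℝ) < 1 := by norm_num
  obtain ⟨Q₀, Q₁, cQ₀, cQ₁, eQ₀, eQ₁⟩ := hQs.exists_continuous_eqOn_Ioo hlt
  obtain ⟨M₀, M₁, cM₀, cM₁, eM₀, eM₁⟩ := hMs.exists_continuous_eqOn_Ioo hlt
  obtain ⟨g₀, g₁, cg₀, cg₁, eg₀, eg₁⟩ := hg.exists_continuous_eqOn_Ioo hlt
  obtain ⟨h₀, h₁, ch₀, ch₁, eh₀, eh₁⟩ := hh.exists_continuous_eqOn_Ioo hlt
  obtain ⟨v₀, v₁, cv₀, cv₁, ev₀, ev₁⟩ := hv.exists_continuous_eqOn_Ioo hlt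
  obtain ⟨w₀, w₁, cw₀, cw₁, ew₀, ew₁⟩ := hw.exists_continuous_eqOn_Ioo hlt
  have key := second_deriv_integral_quartic (a := -1) (b := 1) (F := F)
    (a₀ := fun y => l / 2 * Q₁ y ^ 2 + (Q₀ y ^ 2 - 1) ^ 2 + l / 2 * M₁ y ^ 2
      + 1 / 4 * (M₀ y ^ 2 - 1) ^ 2 - c * Q₀ y * M₀ y ^ 2)
    (a₁ := fun y => l * Q₁ y * g₁ y + 4 * (Q₀ y ^ 2 - 1) * Q₀ y * g₀ y + l * M₁ y * v₁ y
      + (M₀ y ^ 2 - 1) * M₀ y * v₀ y - c * (2 * Q₀ y * M₀ y * v₀ y + g₀ y * M₀ y ^ 2))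
    (a₂ := fun y => l / 2 * (g₁ y ^ 2 + h₁ y ^ 2) + 4 * Q₀ y ^ 2 * g₀ y ^ 2
      + 2 * (Q₀ y ^ 2 - 1) * (g₀ y ^ 2 + h₀ y ^ 2) + l / 2 * (v₁ y ^ 2 + w₁ y ^ 2)
      + M₀ y ^ 2 * v₀ y ^ 2 + 1 / 2 * (M₀ y ^ 2 - 1) * (v₀ y ^ 2 + w₀ y ^ 2)
      - c * (Q₀ y * (v₀ y ^ 2 - w₀ y ^ 2) + 2 * g₀ y * M₀ y * v₀ y)
      - 2 * c * h₀ y * M₀ y * w₀ y)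
    (a₃ := fun y => 4 * Q₀ y * g₀ y * (g₀ y ^ 2 + h₀ y ^ 2)
      + M₀ y * v₀ y * (v₀ y ^ 2 + w₀ y ^ 2) - c * g₀ y * (v₀ y ^ 2 - w₀ y ^ 2)
      - 2 * c * h₀ y * v₀ y * w₀ y)
    (a₄ := fun y => (g₀ y ^ 2 + h₀ y ^ 2) ^ 2 + 1 / 4 * (v₀ y ^ 2 + w₀ y ^ 2) ^ 2)
    (by fun_prop) (by fun_prop) (by fun_prop) (by fun_prop) (by fun_prop)
    (fun t => by
      rw [hF]
      refine integral_congr_of_eqOn_Ioo hlt.le fun y hy => ?_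
      simp only [eQ₀ hy, eQ₁ hy, eM₀ hy, eM₁ hy, eg₀ hy, eg₁ hy, eh₀ hy, eh₁ hy, ev₀ hy,
        ev₁ hy, ew₀ hy, ew₁ hy]
      ring)
  refine ⟨key.1, key.2.1, key.2.2.trans ?_⟩
  have hgv : EqOn _ (fun y => l * g₁ y ^ 2 + l * v₁ y ^ 2
      + 4 * (3 * Q₀ y ^ 2 - 1) * g₀ y ^ 2 + (3 * M₀ y ^ 2 - 1) * v₀ y ^ 2
      - 4 * c * g₀ y * M₀ y * v₀ y - 2 * c * Q₀ y * v₀ y ^ 2) (Ioo (-1) 1) := fun y hy => by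
    simp only [← eQ₀ hy, ← eM₀ hy, ← eg₀ hy, ← eg₁ hy, ← ev₀ hy, ← ev₁ hy]
    rfl
  have hhw : EqOn _ (fun y => l * h₁ y ^ 2 + l * w₁ y ^ 2
      + 4 * (Q₀ y ^ 2 - 1) * h₀ y ^ 2 + (M₀ y ^ 2 - 1) * w₀ y ^ 2
      + 2 * c * Q₀ y * w₀ y ^ 2 - 4 * c * h₀ y * w₀ y * M₀ y) (Ioo (-1) 1) := fun y hy => by
    simp only [← eQ₀ hy, ← eM₀ hy, ← eh₀ hy, ← eh₁ hy, ← ew₀ hy, ← ew₁ hy]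
    rfl
  rw [integral_congr_of_eqOn_Ioo hlt.le hgv, integral_congr_of_eqOn_Ioo hlt.le hhw,
    ← integral_add (Continuous.intervalIntegrable (by fun_prop) _ _)
      (Continuous.intervalIntegrable (by fun_prop) _ _)]
  congr 1 with y
  ring
end

section
/- Test-map energy bound: fix c > 0, let ρ* = ρ*(c) be the unique positive root of x³ − (1+c²/2)x − c/4 and σ* = √(1 + 2cρ*). For l ∈ (0,1) define Q^t : [−1,1] → ℝ by Q^t(y) = the linear interpolation from 1 at y=−1 to ρ* at y=−1+√l, then Q^t ≡ ρ* on [−1+√l, 1−√l], then the linear interpolation from ρ* at y=1−√l to −1 at y=1; define M^t analogously with interior value σ* and the same boundary values 1 and −1. Then there exists a constant C > 0, depending only on c, such that for all l ∈ (0,1): ∫_{−1}^{1} [ (l/2)(Q^t{}'(y))² + (l/2)(M^t{}'(y))² + (Q^t(y)²−1)² + (1/4)(M^t(y)²−1)² − cQ^t(y)M^t(y)² − β(c) ] dy ≤ C√l, where β(c) = (ρ*²−1)² + (1/4)(σ*²−1)² − cρ*σ*² and the integral is computed piecewise on the three subintervals (the derivatives exist off the two interpolation break points). -/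
open Set intervalIntegral

/-- Linear interpolation from value `a` at `x0` to value `b` at `x1`. -/
noncomputable def interp (a b x0 x1 y : ℝ) : ℝ := a + (b - a) * (y - x0) / (x1 - x0)

/-- The piecewise-linear test map: equal to the linear interpolation from `1` at
`y = −1` to the interior value `ρ` at `y = −1 + √l`, constantly `ρ` on
`[−1+√l, 1−√l]`, and the linear interpolation from `ρ` at `y = 1 − √l` to `−1`
at `y = 1`. -/
noncomputable def testMap (l ρ : ℝ) (y : ℝ) : ℝ :=
  if y < -1 + Real.sqrt l then interp 1 ρ (-1) (-1 + Real.sqrt l) y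
  else if y ≤ 1 - Real.sqrt l then ρ
  else interp ρ (-1) (1 - Real.sqrt l) 1 y

theorem hasDerivAt_interp (a b x0 x1 y : ℝ) :
    HasDerivAt (interp a b x0 x1) ((b - a) / (x1 - x0)) y := by
  have h := ((((hasDerivAt_id y).sub_const x0).const_mul (b - a)).div_const
    (x1 - x0)).const_add a
  rw [mul_one] at h
  exact h

theorem abs_interp_le {a b x0 x1 y A : ℝ} (ha : |a| ≤ A) (hb : |b| ≤ A)
    (hy : y ∈ Ioo x0 x1) : |interp a b x0 x1 y| ≤ A := by
  have hx : 0 < x1 - x0 := by linarith [hy.1, hy.2]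
  obtain ⟨t, ht⟩ : ∃ t, t = (y - x0) / (x1 - x0) := ⟨_, rfl⟩
  have ht0 : 0 ≤ t := ht ▸ div_nonneg (by linarith [hy.1]) hx.le
  have ht1 : t ≤ 1 := by rw [ht, div_le_one hx]; linarith [hy.2]
  have hI : interp a b x0 x1 y = (1 - t) * a + t * b := by
    rw [interp, mul_div_assoc, ← ht]; ring
  rw [abs_le] at ha hb ⊢
  rw [hI]
  constructor <;> nlinarith

theorem testMap_left (l ρ : ℝ) {y : ℝ} (hy : y < -1 + Real.sqrt l) :
    testMap l ρ y = interp 1 ρ (-1) (-1 + Real.sqrt l) y := by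
  rw [testMap, if_pos hy]

theorem testMap_middle (l ρ : ℝ) {y : ℝ} (hy : y ∈ Ioo (-1 + Real.sqrt l) (1 - Real.sqrt l)) :
    testMap l ρ y = ρ := by
  rw [testMap, if_neg hy.1.not_gt, if_pos hy.2.le]

theorem testMap_right {l : ℝ} (hl : l < 1) (ρ : ℝ) {y : ℝ} (hy : 1 - Real.sqrt l < y) :
    testMap l ρ y = interp ρ (-1) (1 - Real.sqrt l) 1 y := by
  have hs : Real.sqrt l < 1 := by rw [Real.sqrt_lt' one_pos]; simpa using hl
  rw [testMap, if_neg (by linarith), if_neg (by linarith)]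

theorem deriv_testMap_middle (l ρ : ℝ) {y : ℝ}
    (hy : y ∈ Ioo (-1 + Real.sqrt l) (1 - Real.sqrt l)) : deriv (testMap l ρ) y = 0 := by
  have h : testMap l ρ =ᶠ[nhds y] fun _ => ρ := by
    filter_upwards [isOpen_Ioo.mem_nhds hy] with z hz using testMap_middle l ρ hz
  rw [h.deriv_eq, deriv_const]

/-- In the boundary layers the test map is bounded, and its slope is of order `1 / √l`. -/
theorem testMap_layer_bounds {l : ℝ} (hl : l ∈ Ioo (0 : ℝ) 1) (ρ : ℝ) {y : ℝ}
    (hy : y ∈ Ioo (-1) (-1 + Real.sqrt l) ∨ y ∈ Ioo (1 - Real.sqrt l) 1) :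
    |testMap l ρ y| ≤ 1 + |ρ| ∧ l * deriv (testMap l ρ) y ^ 2 ≤ (1 + |ρ|) ^ 2 := by
  have hs : 0 < Real.sqrt l := Real.sqrt_pos.2 hl.1
  have hsq : Real.sqrt l ^ 2 = l := Real.sq_sqrt hl.1.le
  have hone : |(1 : ℝ)| ≤ 1 + |ρ| := by simp
  have hρ : |ρ| ≤ 1 + |ρ| := by simp
  have slope (v : ℝ) (hv : |v| ≤ 1 + |ρ|) : l * (v / Real.sqrt l) ^ 2 ≤ (1 + |ρ|) ^ 2 := by
    rw [div_pow, hsq, mul_div_cancel₀ _ hl.1.ne', ← sq_abs v]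
    gcongr
  rcases hy with hy | hy
  · have h : testMap l ρ =ᶠ[nhds y] interp 1 ρ (-1) (-1 + Real.sqrt l) := by
      filter_upwards [isOpen_Iio.mem_nhds hy.2] with z hz using testMap_left l ρ hz
    rw [h.deriv_eq, h.eq_of_nhds, (hasDerivAt_interp _ _ _ _ _).deriv]
    refine ⟨abs_interp_le hone hρ hy, ?_⟩
    rw [show -1 + Real.sqrt l - -1 = Real.sqrt l by ring]
    exact slope _ ((abs_sub _ _).trans (by simp [add_comm]))
  · have h : testMap l ρ =ᶠ[nhds y] interp ρ (-1) (1 - Real.sqrt l) 1 := by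
      filter_upwards [isOpen_Ioi.mem_nhds hy.1] with z hz using testMap_right hl.2 ρ hz
    rw [h.deriv_eq, h.eq_of_nhds, (hasDerivAt_interp _ _ _ _ _).deriv]
    refine ⟨abs_interp_le hρ (by simp) hy, ?_⟩
    rw [show 1 - (1 - Real.sqrt l) = Real.sqrt l by ring]
    exact slope _ ((abs_sub _ _).trans (by simp))

/-- Pointwise bound for the shifted energy density in terms of bounds on its arguments. -/
theorem abs_shifted_density_le {l c p r q m β A B : ℝ} (hl : 0 < l) (hc : 0 < c)
    (hp : l * p ^ 2 ≤ A ^ 2) (hr : l * r ^ 2 ≤ B ^ 2) (hq : |q| ≤ A) (hm : |m| ≤ B) :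
    |l / 2 * p ^ 2 + l / 2 * r ^ 2 + (q ^ 2 - 1) ^ 2 + 1 / 4 * (m ^ 2 - 1) ^ 2
        - c * q * m ^ 2 - β|
      ≤ A ^ 2 + B ^ 2 + (A ^ 2 + 1) ^ 2 + (B ^ 2 + 1) ^ 2 + c * A * B ^ 2 + |β| := by
  have hq2 : q ^ 2 ≤ A ^ 2 := by rw [← sq_abs q]; gcongr
  have hm2 : m ^ 2 ≤ B ^ 2 := by rw [← sq_abs m]; gcongr
  have hq4 : (q ^ 2 - 1) ^ 2 ≤ (A ^ 2 + 1) ^ 2 :=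
    sq_le_sq' (by nlinarith [sq_nonneg q]) (by linarith)
  have hm4 : (m ^ 2 - 1) ^ 2 ≤ (B ^ 2 + 1) ^ 2 :=
    sq_le_sq' (by nlinarith [sq_nonneg m]) (by linarith)
  have hcoup : |c * q * m ^ 2| ≤ c * A * B ^ 2 := by
    have hA : 0 ≤ A := (abs_nonneg q).trans hq
    rw [abs_mul, abs_mul, abs_of_pos hc, abs_of_nonneg (sq_nonneg m)]
    gcongr
  have hlp : 0 ≤ l * p ^ 2 := by positivity
  have hlr : 0 ≤ l * r ^ 2 := by positivity
  have := abs_le.1 hcoup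
  have := neg_abs_le β
  have := le_abs_self β
  rw [abs_le]
  constructor <;> linarith [sq_nonneg (q ^ 2 - 1), sq_nonneg (m ^ 2 - 1),
    sq_nonneg (A ^ 2 + 1), sq_nonneg (B ^ 2 + 1), sq_nonneg A, sq_nonneg B]

theorem integral_le_of_norm_le_const_Ioo {f : ℝ → ℝ} {a b K : ℝ} (hab : a ≤ b)
    (h : ∀ y ∈ Ioo a b, ‖f y‖ ≤ K) : ∫ y in a..b, f y ≤ K * (b - a) := by
  have hn : ‖∫ y in a..b, f y‖ ≤ K * |b - a| := by
    refine norm_integral_le_of_norm_le_const_ae ?_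
    filter_upwards [MeasureTheory.Measure.ae_ne MeasureTheory.volume b] with y hyb hy
    rw [uIoc_of_le hab] at hy
    exact h y ⟨hy.1, lt_of_le_of_ne hy.2 hyb⟩
  rw [abs_of_nonneg (sub_nonneg.2 hab)] at hn
  exact (Real.le_norm_self _).trans hn

/-- A function bounded by `K` near the two ends of an interval and vanishing in between has
integral at most `K` times the total length of the ends. -/
theorem integral_le_of_eq_zero_on_middle {f : ℝ → ℝ} {a b d e K : ℝ} (hab : a ≤ b) (hbd : b ≤ d)
    (hde : d ≤ e) (hK : 0 ≤ K) (hl : ∀ y ∈ Ioo a b, ‖f y‖ ≤ K) (hm : ∀ y ∈ Ioo b d, f y = 0)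
    (hr : ∀ y ∈ Ioo d e, ‖f y‖ ≤ K) : ∫ y in a..e, f y ≤ K * (b - a) + K * (e - d) := by
  by_cases hf : IntervalIntegrable f MeasureTheory.volume a e
  · have sub {x y : ℝ} (hx : a ≤ x) (hxy : x ≤ y) (hy : y ≤ e) :
        IntervalIntegrable f MeasureTheory.volume x y := by
      refine hf.mono_set ?_
      rw [uIcc_of_le hxy, uIcc_of_le (by linarith)]
      exact Icc_subset_Icc hx hy
    have hb := sub le_rfl hab (hbd.trans hde)
    have hd := sub hab hbd hde
    have he := sub (hab.trans hbd) hde le_rfl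
    rw [← integral_add_adjacent_intervals (hb.trans hd) he,
      ← integral_add_adjacent_intervals hb hd]
    have h0 := integral_le_of_norm_le_const_Ioo (f := f) (K := 0) hbd fun y hy => by
      simp [hm y hy]
    linarith [integral_le_of_norm_le_const_Ioo hab hl, integral_le_of_norm_le_const_Ioo hde hr]
  · rw [integral_undef hf]
    have := mul_nonneg hK (sub_nonneg.2 hab)
    have := mul_nonneg hK (sub_nonneg.2 hde)
    linarith

/-- Test-map energy bound: the shifted OR energy of the piecewise-linear
competitors `(Q^t, M^t)` with interior values `ρ*` and `σ* = √(1 + 2cρ*)` is at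
most `C√l` for small `l`, where `β(c)` is the minimum value of the OR bulk
density. -/
theorem test_map_energy_bound (c ρStar : ℝ) (hc : 0 < c) (hρpos : 0 < ρStar)
    (hρroot : ρStar ^ 3 - (1 + c ^ 2 / 2) * ρStar - c / 4 = 0)
    (hρuniq : ∀ ρ : ℝ, 0 < ρ → ρ ^ 3 - (1 + c ^ 2 / 2) * ρ - c / 4 = 0 → ρ = ρStar) :
    ∃ C : ℝ, 0 < C ∧ ∀ l ∈ Ioo (0 : ℝ) 1,
      (∫ y in (-1 : ℝ)..1,
        (l / 2 * (deriv (testMap l ρStar) y) ^ 2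
          + l / 2 * (deriv (testMap l (Real.sqrt (1 + 2 * c * ρStar))) y) ^ 2
          + ((testMap l ρStar y) ^ 2 - 1) ^ 2
          + 1 / 4 * ((testMap l (Real.sqrt (1 + 2 * c * ρStar)) y) ^ 2 - 1) ^ 2
          - c * testMap l ρStar y * (testMap l (Real.sqrt (1 + 2 * c * ρStar)) y) ^ 2
          - ((ρStar ^ 2 - 1) ^ 2
              + 1 / 4 * ((Real.sqrt (1 + 2 * c * ρStar)) ^ 2 - 1) ^ 2
              - c * ρStar * (Real.sqrt (1 + 2 * c * ρStar)) ^ 2)))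
        ≤ C * Real.sqrt l := by
  obtain ⟨σ, hσ⟩ : ∃ σ, σ = Real.sqrt (1 + 2 * c * ρStar) := ⟨_, rfl⟩
  rw [← hσ]
  obtain ⟨β, hβ⟩ : ∃ β, β = (ρStar ^ 2 - 1) ^ 2 + 1 / 4 * (σ ^ 2 - 1) ^ 2 - c * ρStar * σ ^ 2 :=
    ⟨_, rfl⟩
  obtain ⟨K, hK⟩ : ∃ K, K = (1 + |ρStar|) ^ 2 + (1 + |σ|) ^ 2 + ((1 + |ρStar|) ^ 2 + 1) ^ 2
      + ((1 + |σ|) ^ 2 + 1) ^ 2 + c * (1 + |ρStar|) * (1 + |σ|) ^ 2 + |β| := ⟨_, rfl⟩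
  have hKpos : 0 < K := by rw [hK]; positivity
  refine ⟨2 * K, by positivity, fun l hl => ?_⟩
  have hs : 0 < Real.sqrt l := Real.sqrt_pos.2 hl.1
  have hs1 : Real.sqrt l < 1 := by rw [Real.sqrt_lt' one_pos]; simpa using hl.2
  rw [← hβ]
  have layer (y : ℝ) (hy : y ∈ Ioo (-1) (-1 + Real.sqrt l) ∨ y ∈ Ioo (1 - Real.sqrt l) 1) :
      ‖l / 2 * deriv (testMap l ρStar) y ^ 2 + l / 2 * deriv (testMap l σ) y ^ 2
        + (testMap l ρStar y ^ 2 - 1) ^ 2 + 1 / 4 * (testMap l σ y ^ 2 - 1) ^ 2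
        - c * testMap l ρStar y * testMap l σ y ^ 2 - β‖ ≤ K := by
    obtain ⟨hq, hp⟩ := testMap_layer_bounds hl ρStar hy
    obtain ⟨hm, hr⟩ := testMap_layer_bounds hl σ hy
    rw [hK]
    exact abs_shifted_density_le hl.1 hc hp hr hq hm
  refine (integral_le_of_eq_zero_on_middle (b := -1 + Real.sqrt l) (d := 1 - Real.sqrt l)
    (by linarith) (by linarith) (by linarith) hKpos.le (fun y hy => layer y (Or.inl hy))
    (fun y hy => ?_) (fun y hy => layer y (Or.inr hy))).trans_eq (by ring)
  rw [deriv_testMap_middle l _ hy, deriv_testMap_middle l _ hy, testMap_middle l _ hy,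
    testMap_middle l _ hy, hβ]
  ring
end

section
/- Strict midpoint convexity on the maximum-principle region: for every c > 0 there exists l*(c) > 0 such that for all l > l*(c) the following holds. Let (Q₁₁,Q₁₂,M₁,M₂) and (Q̄₁₁,Q̄₁₂,M̄₁,M̄₂) be two quadruples of functions continuously differentiable on [−1,1], both satisfying the boundary conditions Q₁₁(−1)=M₁(−1)=1, Q₁₁(1)=M₁(1)=−1, Q₁₂(±1)=M₂(±1)=0 (and likewise for the barred quadruple), both satisfying the pointwise bounds Q₁₁² + Q₁₂² ≤ ρ*(c)² and M₁² + M₂² ≤ 1 + 2cρ*(c) on [−1,1], and not identically equal. Then F evaluated at the pointwise midpoint quadruple ((Q₁₁+Q̄₁₁)/2, (Q₁₂+Q̄₁₂)/2, (M₁+M̄₁)/2, (M₂+M̄₂)/2) is strictly less than (F(Q₁₁,Q₁₂,M₁,M₂) + F(Q̄₁₁,Q̄₁₂,M̄₁,M̄₂))/2. -/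
open Set intervalIntegral

/-- The ferronematic energy on `[−1,1]` with elastic constant `l`, coupling
parameter `c` and `ξ = 1`. -/
noncomputable def ferroEnergy (l c : ℝ) (Q11 Q12 M1 M2 : ℝ → ℝ) : ℝ :=
  ∫ y in (-1 : ℝ)..1,
    (l / 2 * ((deriv Q11 y) ^ 2 + (deriv Q12 y) ^ 2)
      + ((Q11 y) ^ 2 + (Q12 y) ^ 2 - 1) ^ 2
      + l / 2 * ((deriv M1 y) ^ 2 + (deriv M2 y) ^ 2)
      + 1 / 4 * ((M1 y) ^ 2 + (M2 y) ^ 2 - 1) ^ 2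
      - c * Q11 y * ((M1 y) ^ 2 - (M2 y) ^ 2)
      - 2 * c * Q12 y * M1 y * M2 y)

/-- The integrand of `ferroEnergy` as a function of the values and slopes of the fields. -/
noncomputable def ferroDensity (l c q₁ q₂ m₁ m₂ q₁' q₂' m₁' m₂' : ℝ) : ℝ :=
  l / 2 * (q₁' ^ 2 + q₂' ^ 2) + (q₁ ^ 2 + q₂ ^ 2 - 1) ^ 2
    + l / 2 * (m₁' ^ 2 + m₂' ^ 2) + 1 / 4 * (m₁ ^ 2 + m₂ ^ 2 - 1) ^ 2
    - c * q₁ * (m₁ ^ 2 - m₂ ^ 2) - 2 * c * q₂ * m₁ * m₂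

lemma ferroEnergy_eq_integral_density (l c : ℝ) {Q₁ Q₂ M₁ M₂ Q₁' Q₂' M₁' M₂' : ℝ → ℝ}
    (hQ₁ : ∀ y ∈ Ioo (-1 : ℝ) 1, HasDerivAt Q₁ (Q₁' y) y)
    (hQ₂ : ∀ y ∈ Ioo (-1 : ℝ) 1, HasDerivAt Q₂ (Q₂' y) y)
    (hM₁ : ∀ y ∈ Ioo (-1 : ℝ) 1, HasDerivAt M₁ (M₁' y) y)
    (hM₂ : ∀ y ∈ Ioo (-1 : ℝ) 1, HasDerivAt M₂ (M₂' y) y) :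
    ferroEnergy l c Q₁ Q₂ M₁ M₂ = ∫ y in (-1 : ℝ)..1,
      ferroDensity l c (Q₁ y) (Q₂ y) (M₁ y) (M₂ y) (Q₁' y) (Q₂' y) (M₁' y) (M₂' y) := by
  unfold ferroEnergy
  rw [integral_of_le (by norm_num), integral_of_le (by norm_num),
    MeasureTheory.integral_Ioc_eq_integral_Ioo, MeasureTheory.integral_Ioc_eq_integral_Ioo]
  refine MeasureTheory.setIntegral_congr_fun measurableSet_Ioo fun y hy => ?_
  simp only [(hQ₁ y hy).deriv, (hQ₂ y hy).deriv, (hM₁ y hy).deriv, (hM₂ y hy).deriv,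
    ferroDensity]

lemma continuousOn_ferroDensity (l c : ℝ) {s : Set ℝ} {Q₁ Q₂ M₁ M₂ Q₁' Q₂' M₁' M₂' : ℝ → ℝ}
    (hQ₁ : ContinuousOn Q₁ s) (hQ₂ : ContinuousOn Q₂ s)
    (hM₁ : ContinuousOn M₁ s) (hM₂ : ContinuousOn M₂ s)
    (hQ₁' : ContinuousOn Q₁' s) (hQ₂' : ContinuousOn Q₂' s)
    (hM₁' : ContinuousOn M₁' s) (hM₂' : ContinuousOn M₂' s) :
    ContinuousOn (fun y => ferroDensity l c (Q₁ y) (Q₂ y) (M₁ y) (M₂ y)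
      (Q₁' y) (Q₂' y) (M₁' y) (M₂' y)) s := by
  unfold ferroDensity
  fun_prop

lemma ContDiffOn.exists_continuousOn_hasDerivAt {f : ℝ → ℝ} {a b : ℝ} (hab : a < b)
    (hf : ContDiffOn ℝ 1 f (Icc a b)) :
    ∃ f' : ℝ → ℝ, ContinuousOn f' (Icc a b) ∧ ∀ y ∈ Ioo a b, HasDerivAt f (f' y) y := by
  refine ⟨derivWithin f (Icc a b),
    hf.continuousOn_derivWithin (uniqueDiffOn_Icc hab) le_rfl, fun y hy => ?_⟩
  exact ((hf.differentiableOn one_ne_zero y (Ioo_subset_Icc_self hy)).hasDerivWithinAt).hasDerivAt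
    (Icc_mem_nhds hy.1 hy.2)

/-- The pointwise inequality behind the Poincaré inequality on `[-1, 1]`: the bracket is the
derivative of `y * d ^ 2` when `d'` is the derivative of `d`. -/
lemma quarter_sq_le_sq_deriv_add {y d d' : ℝ} (hy : y ∈ Icc (-1 : ℝ) 1) :
    1 / 4 * d ^ 2 ≤ d' ^ 2 + 1 / 2 * (d ^ 2 + y * (2 * d * d')) := by
  have hy2 : y ^ 2 ≤ 1 := by nlinarith [hy.1, hy.2]
  nlinarith [sq_nonneg (d' + y * d / 2), mul_nonneg (sub_nonneg.2 hy2) (sq_nonneg d)]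

lemma midpoint_sq_add_sq_le {a b u v r : ℝ} (h : a ^ 2 + b ^ 2 ≤ r) (h' : u ^ 2 + v ^ 2 ≤ r) :
    ((a + u) / 2) ^ 2 + ((b + v) / 2) ^ 2 ≤ r := by
  nlinarith [sq_nonneg (a - u), sq_nonneg (b - v)]

/-- The second difference of the double-well potential is bounded below. -/
lemma doubleWell_second_difference (a b d e : ℝ) :
    -(2 * (d ^ 2 + e ^ 2)) ≤
      (((a + d) ^ 2 + (b + e) ^ 2 - 1) ^ 2 + ((a - d) ^ 2 + (b - e) ^ 2 - 1) ^ 2) / 2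
        - (a ^ 2 + b ^ 2 - 1) ^ 2 := by
  have h : (((a + d) ^ 2 + (b + e) ^ 2 - 1) ^ 2 + ((a - d) ^ 2 + (b - e) ^ 2 - 1) ^ 2) / 2
        - (a ^ 2 + b ^ 2 - 1) ^ 2 = -(2 * (d ^ 2 + e ^ 2)) + 2 * ((a ^ 2 + b ^ 2) * (d ^ 2 + e ^ 2))
          + (d ^ 2 + e ^ 2) ^ 2 + 4 * (a * d + b * e) ^ 2 := by ring
  rw [h]
  have : 0 ≤ 2 * ((a ^ 2 + b ^ 2) * (d ^ 2 + e ^ 2)) + (d ^ 2 + e ^ 2) ^ 2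
    + 4 * (a * d + b * e) ^ 2 := by positivity
  linarith

/-- The second difference of the nematic-magnetic coupling is bounded above. -/
lemma coupling_second_difference {q₁ q₂ m₁ m₂ d₁ d₂ e₁ e₂ ρ B : ℝ} (hρ : 0 < ρ)
    (hq : q₁ ^ 2 + q₂ ^ 2 ≤ ρ ^ 2) (hm : m₁ ^ 2 + m₂ ^ 2 ≤ B) :
    ((q₁ + d₁) * ((m₁ + e₁) ^ 2 - (m₂ + e₂) ^ 2) + 2 * (q₂ + d₂) * (m₁ + e₁) * (m₂ + e₂)
      + ((q₁ - d₁) * ((m₁ - e₁) ^ 2 - (m₂ - e₂) ^ 2) + 2 * (q₂ - d₂) * (m₁ - e₁) * (m₂ - e₂))) / 2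
      - (q₁ * (m₁ ^ 2 - m₂ ^ 2) + 2 * q₂ * m₁ * m₂)
      ≤ B * (d₁ ^ 2 + d₂ ^ 2) + (1 + ρ) * (e₁ ^ 2 + e₂ ^ 2) := by
  have hqe : q₁ * (e₁ ^ 2 - e₂ ^ 2) + 2 * q₂ * e₁ * e₂ ≤ ρ * (e₁ ^ 2 + e₂ ^ 2) := by
    refine abs_le_of_sq_le_sq' ?_ (by positivity) |>.2
    nlinarith [sq_nonneg (q₁ * (2 * e₁ * e₂) - q₂ * (e₁ ^ 2 - e₂ ^ 2)),
      mul_nonneg (sub_nonneg.2 hq) (sq_nonneg (e₁ ^ 2 + e₂ ^ 2))]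
  have hdm : 2 * ((d₁ * m₁ + d₂ * m₂) * e₁ + (d₂ * m₁ - d₁ * m₂) * e₂)
      ≤ B * (d₁ ^ 2 + d₂ ^ 2) + (e₁ ^ 2 + e₂ ^ 2) := by
    nlinarith [sq_nonneg (d₁ * m₁ + d₂ * m₂ - e₁), sq_nonneg (d₂ * m₁ - d₁ * m₂ - e₂),
      mul_nonneg (sub_nonneg.2 hm) (add_nonneg (sq_nonneg d₁) (sq_nonneg d₂))]
  linarith

/-- Up to an exact derivative, the midpoint convexity gap of the density is bounded below. -/
lemma ferroDensity_midpoint_gap {l c ρ y : ℝ} (hl : 0 ≤ l) (hc : 0 < c) (hρ : 0 < ρ)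
    (hy : y ∈ Icc (-1 : ℝ) 1)
    {q₁ q₂ m₁ m₂ r₁ r₂ n₁ n₂ q₁' q₂' m₁' m₂' r₁' r₂' n₁' n₂' : ℝ}
    (hq : q₁ ^ 2 + q₂ ^ 2 ≤ ρ ^ 2) (hm : m₁ ^ 2 + m₂ ^ 2 ≤ 1 + 2 * c * ρ)
    (hr : r₁ ^ 2 + r₂ ^ 2 ≤ ρ ^ 2) (hn : n₁ ^ 2 + n₂ ^ 2 ≤ 1 + 2 * c * ρ) :
    (l / 8 - (2 + c * (2 + ρ + 2 * c * ρ))) * (((q₁ - r₁) / 2) ^ 2 + ((q₂ - r₂) / 2) ^ 2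
        + ((m₁ - n₁) / 2) ^ 2 + ((m₂ - n₂) / 2) ^ 2) ≤
      (ferroDensity l c q₁ q₂ m₁ m₂ q₁' q₂' m₁' m₂'
        + ferroDensity l c r₁ r₂ n₁ n₂ r₁' r₂' n₁' n₂') / 2
      - ferroDensity l c ((q₁ + r₁) / 2) ((q₂ + r₂) / 2) ((m₁ + n₁) / 2) ((m₂ + n₂) / 2)
          ((q₁' + r₁') / 2) ((q₂' + r₂') / 2) ((m₁' + n₁') / 2) ((m₂' + n₂') / 2)
      + l / 4 * ((((q₁ - r₁) / 2) ^ 2 + y * (2 * ((q₁ - r₁) / 2) * ((q₁' - r₁') / 2)))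
        + (((q₂ - r₂) / 2) ^ 2 + y * (2 * ((q₂ - r₂) / 2) * ((q₂' - r₂') / 2)))
        + (((m₁ - n₁) / 2) ^ 2 + y * (2 * ((m₁ - n₁) / 2) * ((m₁' - n₁') / 2)))
        + (((m₂ - n₂) / 2) ^ 2 + y * (2 * ((m₂ - n₂) / 2) * ((m₂' - n₂') / 2)))) := by
  have hp := midpoint_sq_add_sq_le hq hr
  have hk := midpoint_sq_add_sq_le hm hn
  obtain ⟨p₁, hp₁⟩ : ∃ p, p = (q₁ + r₁) / 2 := ⟨_, rfl⟩
  obtain ⟨p₂, hp₂⟩ : ∃ p, p = (q₂ + r₂) / 2 := ⟨_, rfl⟩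
  obtain ⟨k₁, hk₁⟩ : ∃ p, p = (m₁ + n₁) / 2 := ⟨_, rfl⟩
  obtain ⟨k₂, hk₂⟩ : ∃ p, p = (m₂ + n₂) / 2 := ⟨_, rfl⟩
  obtain ⟨d₁, hd₁⟩ : ∃ p, p = (q₁ - r₁) / 2 := ⟨_, rfl⟩
  obtain ⟨d₂, hd₂⟩ : ∃ p, p = (q₂ - r₂) / 2 := ⟨_, rfl⟩
  obtain ⟨e₁, he₁⟩ : ∃ p, p = (m₁ - n₁) / 2 := ⟨_, rfl⟩
  obtain ⟨e₂, he₂⟩ : ∃ p, p = (m₂ - n₂) / 2 := ⟨_, rfl⟩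
  rw [← hp₁, ← hp₂] at hp
  rw [← hk₁, ← hk₂] at hk
  rw [← hp₁, ← hp₂, ← hk₁, ← hk₂, ← hd₁, ← hd₂, ← he₁, ← he₂]
  obtain rfl : q₁ = p₁ + d₁ := by linarith
  obtain rfl : q₂ = p₂ + d₂ := by linarith
  obtain rfl : m₁ = k₁ + e₁ := by linarith
  obtain rfl : m₂ = k₂ + e₂ := by linarith
  obtain rfl : r₁ = p₁ - d₁ := by linarith
  obtain rfl : r₂ = p₂ - d₂ := by linarith
  obtain rfl : n₁ = k₁ - e₁ := by linarith
  obtain rfl : n₂ = k₂ - e₂ := by linarith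
  clear hp₁ hp₂ hk₁ hk₂ hd₁ hd₂ he₁ he₂ hq hm hr hn
  have hD := doubleWell_second_difference p₁ p₂ d₁ d₂
  have hE := doubleWell_second_difference k₁ k₂ e₁ e₂
  have hC := mul_le_mul_of_nonneg_left
    (coupling_second_difference (d₁ := d₁) (d₂ := d₂) (e₁ := e₁) (e₂ := e₂) hρ hp hk) hc.le
  have hl2 : 0 ≤ l / 2 := by linarith
  have h₁ := mul_le_mul_of_nonneg_left
    (quarter_sq_le_sq_deriv_add (d := d₁) (d' := (q₁' - r₁') / 2) hy) hl2
  have h₂ := mul_le_mul_of_nonneg_left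
    (quarter_sq_le_sq_deriv_add (d := d₂) (d' := (q₂' - r₂') / 2) hy) hl2
  have h₃ := mul_le_mul_of_nonneg_left
    (quarter_sq_le_sq_deriv_add (d := e₁) (d' := (m₁' - n₁') / 2) hy) hl2
  have h₄ := mul_le_mul_of_nonneg_left
    (quarter_sq_le_sq_deriv_add (d := e₂) (d' := (m₂' - n₂') / 2) hy) hl2
  have hslackD : 0 ≤ c * (1 + ρ) * (d₁ ^ 2 + d₂ ^ 2) := by positivity
  have hslackE : 0 ≤ (3 / 2 + c * (1 + 2 * c * ρ)) * (e₁ ^ 2 + e₂ ^ 2) := by positivity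
  unfold ferroDensity
  linarith

/-- `y * d ^ 2` has a derivative of zero mean when `d` vanishes at `±1`. -/
lemma integral_deriv_mul_sq_eq_zero {d d' : ℝ → ℝ} (hd : ContinuousOn d (Icc (-1) 1))
    (hd' : ContinuousOn d' (Icc (-1) 1)) (hder : ∀ y ∈ Ioo (-1 : ℝ) 1, HasDerivAt d (d' y) y)
    (hleft : d (-1) = 0) (hright : d 1 = 0) :
    ∫ y in (-1 : ℝ)..1, (d y ^ 2 + y * (2 * d y * d' y)) = 0 := by
  rw [integral_eq_sub_of_hasDerivAt_of_le (f := fun y => y * d y ^ 2) (by norm_num)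
    (by fun_prop) (fun y hy => ?_) (ContinuousOn.intervalIntegrable_of_Icc (by norm_num)
      (by fun_prop))]
  · simp [hleft, hright]
  · exact ((hasDerivAt_id' y).mul ((hder y hy).pow 2)).congr_deriv (by simp)

lemma integral_mul_sum_four_eq_zero {a b : ℝ} (hab : a ≤ b) (k : ℝ) {f₁ f₂ f₃ f₄ : ℝ → ℝ}
    (h₁ : ContinuousOn f₁ (Icc a b)) (h₂ : ContinuousOn f₂ (Icc a b))
    (h₃ : ContinuousOn f₃ (Icc a b)) (h₄ : ContinuousOn f₄ (Icc a b))
    (i₁ : ∫ y in a..b, f₁ y = 0) (i₂ : ∫ y in a..b, f₂ y = 0)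
    (i₃ : ∫ y in a..b, f₃ y = 0) (i₄ : ∫ y in a..b, f₄ y = 0) :
    ∫ y in a..b, k * (f₁ y + f₂ y + f₃ y + f₄ y) = 0 := by
  have hi {u : ℝ → ℝ} (hu : ContinuousOn u (Icc a b)) :
      IntervalIntegrable u MeasureTheory.volume a b := hu.intervalIntegrable_of_Icc hab
  rw [integral_const_mul, integral_add (hi (by fun_prop)) (hi h₄),
    integral_add (hi (by fun_prop)) (hi h₃), integral_add (hi h₁) (hi h₂), i₁, i₂, i₃, i₄]
  simp

/-- Strict comparison of an integral with an average of integrals, modulo a term of zero mean. -/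
lemma integral_lt_average_of_gap {a b : ℝ} (hab : a < b) {f g h φ : ℝ → ℝ}
    (hf : ContinuousOn f (Icc a b)) (hg : ContinuousOn g (Icc a b))
    (hh : ContinuousOn h (Icc a b)) (hφ : ContinuousOn φ (Icc a b))
    (hφ0 : ∫ y in a..b, φ y = 0)
    (hnonneg : ∀ y ∈ Icc a b, 0 ≤ (f y + g y) / 2 - h y + φ y)
    (hpos : ∃ y ∈ Icc a b, 0 < (f y + g y) / 2 - h y + φ y) :
    ∫ y in a..b, h y < ((∫ y in a..b, f y) + ∫ y in a..b, g y) / 2 := by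
  have hi {u : ℝ → ℝ} (hu : ContinuousOn u (Icc a b)) :
      IntervalIntegrable u MeasureTheory.volume a b := hu.intervalIntegrable_of_Icc hab.le
  have key : 0 < ∫ y in a..b, ((f y + g y) / 2 - h y + φ y) :=
    integral_pos hab (by fun_prop) (fun y hy => hnonneg y (Ioc_subset_Icc_self hy)) hpos
  rw [integral_add (hi (by fun_prop)) (hi hφ), integral_sub (hi (by fun_prop)) (hi hh),
    integral_div, integral_add (hi hf) (hi hg), hφ0] at key
  linarith

/-- Strict midpoint convexity of the ferronematic energy on the region carved out
by the maximum principle (with `ρ*(c)` the unique positive root of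
`x³ − (1 + c²/2)x − c/4`), for sufficiently large elastic constant `l`. -/
theorem ferro_strict_midpoint_convexity (c ρStar : ℝ) (hc : 0 < c)
    (hρpos : 0 < ρStar)
    (hρroot : ρStar ^ 3 - (1 + c ^ 2 / 2) * ρStar - c / 4 = 0) :
    ∃ lstar : ℝ, 0 < lstar ∧ ∀ l : ℝ, lstar < l →
      ∀ Q11 Q12 M1 M2 R11 R12 N1 N2 : ℝ → ℝ,
        ContDiffOn ℝ 1 Q11 (Icc (-1) 1) → ContDiffOn ℝ 1 Q12 (Icc (-1) 1) →
        ContDiffOn ℝ 1 M1 (Icc (-1) 1) → ContDiffOn ℝ 1 M2 (Icc (-1) 1) →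
        ContDiffOn ℝ 1 R11 (Icc (-1) 1) → ContDiffOn ℝ 1 R12 (Icc (-1) 1) →
        ContDiffOn ℝ 1 N1 (Icc (-1) 1) → ContDiffOn ℝ 1 N2 (Icc (-1) 1) →
        Q11 (-1) = 1 → M1 (-1) = 1 → Q11 1 = -1 → M1 1 = -1 →
        Q12 (-1) = 0 → Q12 1 = 0 → M2 (-1) = 0 → M2 1 = 0 →
        R11 (-1) = 1 → N1 (-1) = 1 → R11 1 = -1 → N1 1 = -1 →
        R12 (-1) = 0 → R12 1 = 0 → N2 (-1) = 0 → N2 1 = 0 →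
        (∀ y ∈ Icc (-1 : ℝ) 1,
          (Q11 y) ^ 2 + (Q12 y) ^ 2 ≤ ρStar ^ 2 ∧
          (M1 y) ^ 2 + (M2 y) ^ 2 ≤ 1 + 2 * c * ρStar) →
        (∀ y ∈ Icc (-1 : ℝ) 1,
          (R11 y) ^ 2 + (R12 y) ^ 2 ≤ ρStar ^ 2 ∧
          (N1 y) ^ 2 + (N2 y) ^ 2 ≤ 1 + 2 * c * ρStar) →
        ¬ (∀ y ∈ Icc (-1 : ℝ) 1,
          Q11 y = R11 y ∧ Q12 y = R12 y ∧ M1 y = N1 y ∧ M2 y = N2 y) →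
        ferroEnergy l c (fun y => (Q11 y + R11 y) / 2) (fun y => (Q12 y + R12 y) / 2)
            (fun y => (M1 y + N1 y) / 2) (fun y => (M2 y + N2 y) / 2)
          < (ferroEnergy l c Q11 Q12 M1 M2 + ferroEnergy l c R11 R12 N1 N2) / 2 := by
  have hK : 0 < 2 + c * (2 + ρStar + 2 * c * ρStar) := by positivity
  refine ⟨8 * (2 + c * (2 + ρStar + 2 * c * ρStar)), by positivity, ?_⟩
  intro l hl Q11 Q12 M1 M2 R11 R12 N1 N2 cQ11 cQ12 cM1 cM2 cR11 cR12 cN1 cN2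
    hQ11 hM1 hQ11' hM1' hQ12 hQ12' hM2 hM2' hR11 hN1 hR11' hN1' hR12 hR12' hN2 hN2'
    hbQ hbR hne
  obtain ⟨dQ11, kdQ11, DQ11⟩ := cQ11.exists_continuousOn_hasDerivAt (by norm_num)
  obtain ⟨dQ12, kdQ12, DQ12⟩ := cQ12.exists_continuousOn_hasDerivAt (by norm_num)
  obtain ⟨dM1, kdM1, DM1⟩ := cM1.exists_continuousOn_hasDerivAt (by norm_num)
  obtain ⟨dM2, kdM2, DM2⟩ := cM2.exists_continuousOn_hasDerivAt (by norm_num)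
  obtain ⟨dR11, kdR11, DR11⟩ := cR11.exists_continuousOn_hasDerivAt (by norm_num)
  obtain ⟨dR12, kdR12, DR12⟩ := cR12.exists_continuousOn_hasDerivAt (by norm_num)
  obtain ⟨dN1, kdN1, DN1⟩ := cN1.exists_continuousOn_hasDerivAt (by norm_num)
  obtain ⟨dN2, kdN2, DN2⟩ := cN2.exists_continuousOn_hasDerivAt (by norm_num)
  have kQ11 := cQ11.continuousOn
  have kQ12 := cQ12.continuousOn
  have kM1 := cM1.continuousOn
  have kM2 := cM2.continuousOn
  have kR11 := cR11.continuousOn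
  have kR12 := cR12.continuousOn
  have kN1 := cN1.continuousOn
  have kN2 := cN2.continuousOn
  have hmid {f g f' g' : ℝ → ℝ} (hf : ∀ y ∈ Ioo (-1 : ℝ) 1, HasDerivAt f (f' y) y)
      (hg : ∀ y ∈ Ioo (-1 : ℝ) 1, HasDerivAt g (g' y) y) :
      ∀ y ∈ Ioo (-1 : ℝ) 1, HasDerivAt (fun y => (f y + g y) / 2) ((f' y + g' y) / 2) y :=
    fun y hy => ((hf y hy).add (hg y hy)).div_const 2
  have hdiff {f g f' g' : ℝ → ℝ} (hf : ∀ y ∈ Ioo (-1 : ℝ) 1, HasDerivAt f (f' y) y)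
      (hg : ∀ y ∈ Ioo (-1 : ℝ) 1, HasDerivAt g (g' y) y) :
      ∀ y ∈ Ioo (-1 : ℝ) 1, HasDerivAt (fun y => (f y - g y) / 2) ((f' y - g' y) / 2) y :=
    fun y hy => ((hf y hy).sub (hg y hy)).div_const 2
  rw [ferroEnergy_eq_integral_density l c (hmid DQ11 DR11) (hmid DQ12 DR12) (hmid DM1 DN1)
      (hmid DM2 DN2), ferroEnergy_eq_integral_density l c DQ11 DQ12 DM1 DM2,
    ferroEnergy_eq_integral_density l c DR11 DR12 DN1 DN2]
  have kQ := continuousOn_ferroDensity l c kQ11 kQ12 kM1 kM2 kdQ11 kdQ12 kdM1 kdM2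
  have kR := continuousOn_ferroDensity l c kR11 kR12 kN1 kN2 kdR11 kdR12 kdN1 kdN2
  have kmid {f g : ℝ → ℝ} (hf : ContinuousOn f (Icc (-1) 1)) (hg : ContinuousOn g (Icc (-1) 1)) :
      ContinuousOn (fun y => (f y + g y) / 2) (Icc (-1) 1) := by fun_prop
  have kP := continuousOn_ferroDensity l c (kmid kQ11 kR11) (kmid kQ12 kR12) (kmid kM1 kN1)
    (kmid kM2 kN2) (kmid kdQ11 kdR11) (kmid kdQ12 kdR12) (kmid kdM1 kdN1) (kmid kdM2 kdN2)
  have knull {f g f' g' : ℝ → ℝ} (hf : ContinuousOn f (Icc (-1) 1))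
      (hg : ContinuousOn g (Icc (-1) 1)) (hf' : ContinuousOn f' (Icc (-1) 1))
      (hg' : ContinuousOn g' (Icc (-1) 1)) :
      ContinuousOn (fun y => ((f y - g y) / 2) ^ 2
        + y * (2 * ((f y - g y) / 2) * ((f' y - g' y) / 2))) (Icc (-1) 1) := by fun_prop
  have null₁ := integral_deriv_mul_sq_eq_zero (by fun_prop) (by fun_prop) (hdiff DQ11 DR11)
    (by simp [hQ11, hR11]) (by simp [hQ11', hR11'])
  have null₂ := integral_deriv_mul_sq_eq_zero (by fun_prop) (by fun_prop) (hdiff DQ12 DR12)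
    (by simp [hQ12, hR12]) (by simp [hQ12', hR12'])
  have null₃ := integral_deriv_mul_sq_eq_zero (by fun_prop) (by fun_prop) (hdiff DM1 DN1)
    (by simp [hM1, hN1]) (by simp [hM1', hN1'])
  have null₄ := integral_deriv_mul_sq_eq_zero (by fun_prop) (by fun_prop) (hdiff DM2 DN2)
    (by simp [hM2, hN2]) (by simp [hM2', hN2'])
  have k₁ := knull kQ11 kR11 kdQ11 kdR11
  have k₂ := knull kQ12 kR12 kdQ12 kdR12
  have k₃ := knull kM1 kN1 kdM1 kdN1
  have k₄ := knull kM2 kN2 kdM2 kdN2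
  have hκ : 0 < l / 8 - (2 + c * (2 + ρStar + 2 * c * ρStar)) := by linarith
  have hgap (y : ℝ) (hy : y ∈ Icc (-1 : ℝ) 1) :=
    ferroDensity_midpoint_gap (l := l) (by linarith) hc hρpos hy (hbQ y hy).1 (hbQ y hy).2
      (hbR y hy).1 (hbR y hy).2 (q₁' := dQ11 y) (q₂' := dQ12 y) (m₁' := dM1 y) (m₂' := dM2 y)
      (r₁' := dR11 y) (r₂' := dR12 y) (n₁' := dN1 y) (n₂' := dN2 y)
  refine integral_lt_average_of_gap (by norm_num) kQ kR kP
    ((((k₁.add k₂).add k₃).add k₄).const_mul (l / 4))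
    (integral_mul_sum_four_eq_zero (by norm_num) (l / 4) k₁ k₂ k₃ k₄ null₁ null₂ null₃ null₄)
    (fun y hy => le_trans (by positivity) (hgap y hy)) ?_
  push Not at hne
  obtain ⟨y, hy, hney⟩ := hne
  refine ⟨y, hy, lt_of_lt_of_le (mul_pos hκ ?_) (hgap y hy)⟩
  by_contra hle
  have hQ₁ := sq_nonneg ((Q11 y - R11 y) / 2)
  have hQ₂ := sq_nonneg ((Q12 y - R12 y) / 2)
  have hM₁ := sq_nonneg ((M1 y - N1 y) / 2)
  have hM₂ := sq_nonneg ((M2 y - N2 y) / 2)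
  have hzero {a b : ℝ} (h : ((a - b) / 2) ^ 2 ≤ 0) : a = b := by
    have := pow_eq_zero_iff two_ne_zero |>.1 (le_antisymm h (sq_nonneg _))
    linarith
  exact hney (hzero (by linarith)) (hzero (by linarith)) (hzero (by linarith))
    (hzero (by linarith))
end
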